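/- arXiv:2003.09247 — 2 statements merged into one kernel-verified Lean document; each statement's English description precedes it below -/
import Mathlib

section
/- There exists a constant ε > 0 such that for every large enough integer n the following holds: for every spanning tree T of K_n with maximum degree Δ(T) ≤ ε·√n, in the unbiased Waiter-Client game on the edge set of K_n whose winning sets are the copies of T in K_n, we have n − 1 ≤ τ_WC(F_T, 1) ≤ n. -/
open Finset

/-- `WaiterWins board b win t Cl W` means: starting from the position where Client owns the
elements of `Cl` and Waiter owns the elements of `W`, Waiter can force that within the next `t`
rounds of the `b`-biased Waiter-Client game on the board `board` a position is reached in which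
the predicate `win` holds of (Client's elements, Waiter's elements).  In each round Waiter offers
`b+1` previously unclaimed board elements (or all remaining unclaimed elements, if fewer than
`b+1` remain); Client claims exactly one of them, the rest go to Waiter. -/
def WaiterWins {X : Type*} [DecidableEq X] (board : Finset X) (b : ℕ)
    (win : Finset X → Finset X → Prop) :
    ℕ → Finset X → Finset X → Prop
  | 0, Cl, W => win Cl W
  | (t+1), Cl, W => win Cl W ∨
      ∃ O : Finset X, O.Nonempty ∧ O ⊆ board \ (Cl ∪ W) ∧
        O.card = min (b + 1) ((board \ (Cl ∪ W)).card) ∧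
        ∀ x ∈ O, WaiterWins board b win t (insert x Cl) (W ∪ O.erase x)

/-- `tauWC board F b` : the smallest number of rounds within which Waiter can force Client's
elements to contain some member of the winning family `F`, in the `b`-biased Waiter-Client game
on the board `board`. -/
noncomputable def tauWC {X : Type*} [DecidableEq X] (board : Finset X)
    (F : Set (Finset X)) (b : ℕ) : ℕ :=
  sInf {t | WaiterWins board b (fun Cl _ => ∃ A ∈ F, A ⊆ Cl) t ∅ ∅}

/-- The edge set of the complete graph on `Fin n`. -/
def Kedges (n : ℕ) : Finset (Sym2 (Fin n)) :=
  Finset.univ.filter (fun e => ¬ e.IsDiag)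

/-- The family of edge sets of copies (in `K_n`) of the spanning subgraph of `K_n` with
edge set `E`: images of `E` under permutations of the vertex set. -/
def copiesFamily (n : ℕ) (E : Set (Sym2 (Fin n))) : Set (Finset (Sym2 (Fin n))) :=
  {F | ∃ σ : Equiv.Perm (Fin n), (F : Set (Sym2 (Fin n))) = Sym2.map σ '' E}


section WCproof
open Classical

def WW {n : ℕ} (T : SimpleGraph (Fin n)) (t : ℕ) (Cl W : Finset (Sym2 (Fin n))) : Prop :=
  WaiterWins (Kedges n) 1 (fun Cl _ => ∃ A ∈ copiesFamily n T.edgeSet, A ⊆ Cl) t Cl W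

lemma WW_step {n : ℕ} {T : SimpleGraph (Fin n)} {t : ℕ} {Cl W : Finset (Sym2 (Fin n))}
    (a b c d : Fin n) (hab : a ≠ b) (hcd : c ≠ d) (hne : s(a,b) ≠ s(c,d))
    (h1 : s(a,b) ∉ Cl) (h2 : s(a,b) ∉ W) (h3 : s(c,d) ∉ Cl) (h4 : s(c,d) ∉ W)
    (H1 : WW T t (insert s(a,b) Cl) (insert s(c,d) W))
    (H2 : WW T t (insert s(c,d) Cl) (insert s(a,b) W)) : WW T (t+1) Cl W := by
  unfold WW at *
  rw [WaiterWins]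
  right
  have hsub : ({s(a,b), s(c,d)} : Finset (Sym2 (Fin n))) ⊆ Kedges n \ (Cl ∪ W) := by
    intro e he
    simp only [Finset.mem_insert, Finset.mem_singleton] at he
    rcases he with rfl | rfl <;> simp [Kedges, *]
  refine ⟨{s(a,b), s(c,d)}, by simp, hsub, ?_, ?_⟩
  · have := Finset.card_le_card hsub
    rw [Finset.card_pair hne] at *
    omega
  · intro x hx
    simp only [Finset.mem_insert, Finset.mem_singleton] at hx
    rcases hx with rfl | rfl
    · have : W ∪ ({s(a,b), s(c,d)} : Finset (Sym2 (Fin n))).erase s(a,b) = insert s(c,d) W := by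
        ext e; simp only [Finset.mem_union, Finset.mem_erase, Finset.mem_insert, Finset.mem_singleton]
        grind
      rw [this]; exact H1
    · have : W ∪ ({s(a,b), s(c,d)} : Finset (Sym2 (Fin n))).erase s(c,d) = insert s(a,b) W := by
        ext e; simp only [Finset.mem_union, Finset.mem_erase, Finset.mem_insert, Finset.mem_singleton]
        grind
      rw [this]; exact H2

lemma WW_win {n : ℕ} {T : SimpleGraph (Fin n)} {t : ℕ} {Cl W : Finset (Sym2 (Fin n))}
    (f : Fin n → Fin n) (hf : Function.Injective f)
    (h : ∀ x y, T.Adj x y → s(f x, f y) ∈ Cl) : WW T t Cl W := by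
  have key : ∃ A ∈ copiesFamily n T.edgeSet, A ⊆ Cl := by
    have hb : Function.Bijective f := Finite.injective_iff_bijective.1 hf
    refine ⟨(T.edgeSet.toFinset).image (Sym2.map f), ⟨Equiv.ofBijective f hb, ?_⟩, ?_⟩
    · simp
    · intro e he
      simp only [Finset.mem_image, Set.mem_toFinset] at he
      obtain ⟨e', he', rfl⟩ := he
      induction e' using Sym2.ind with
      | _ x y => exact h x y he'
  unfold WW
  cases t with
  | zero => exact key
  | succ t => rw [WaiterWins]; exact Or.inl key

lemma WW_lower {n : ℕ} {T : SimpleGraph (Fin n)} : ∀ (t : ℕ) (Cl W : Finset (Sym2 (Fin n))),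
    WW T t Cl W → ∃ A ∈ copiesFamily n T.edgeSet, A.card ≤ Cl.card + t := by
  intro t
  induction t with
  | zero =>
    rintro Cl W ⟨A, hA, h⟩
    exact ⟨A, hA, by simpa using Finset.card_le_card h⟩
  | succ t ih =>
    intro Cl W h
    unfold WW at h
    rw [WaiterWins] at h
    rcases h with ⟨A, hA, h⟩ | ⟨O, ⟨x, hx⟩, -, -, h⟩
    · exact ⟨A, hA, by have := Finset.card_le_card h; omega⟩
    · obtain ⟨A, hA, h'⟩ := ih _ _ (h x hx)
      exact ⟨A, hA, by have := Finset.card_insert_le x Cl; omega⟩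

lemma copies_card {n : ℕ} {T : SimpleGraph (Fin n)} (hT : T.IsTree) (A : Finset (Sym2 (Fin n)))
    (hA : A ∈ copiesFamily n T.edgeSet) : A.card = n - 1 := by
  obtain ⟨σ, h⟩ := hA
  have h1 : A.card = T.edgeSet.ncard := by
    rw [← Set.ncard_coe_finset, h, Set.ncard_image_of_injective _ (Sym2.map.injective σ.injective)]
  have h2 := hT.card_edgeFinset
  rw [h1, ← SimpleGraph.coe_edgeFinset, Set.ncard_coe_finset]
  simp at h2
  omega

structure St {n : ℕ} (T : SimpleGraph (Fin n)) (ρ : ℕ) (D : Finset (Fin n)) (f : Fin n → Fin n)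
    (Cl W R : Finset (Sym2 (Fin n))) : Prop where
  inj : ∀ x ∈ D, ∀ y ∈ D, f x = f y → x = y
  cl : Cl = R.image (Sym2.map f)
  rT : ∀ x y, s(x,y) ∈ R → T.Adj x y ∧ x ∈ D
  rc : R.card + ρ = D.card
  w : ∀ a b, s(a,b) ∈ W → a ∈ D.image f ∨ b ∈ D.image f
  wu : ∀ x ∈ D, (Finset.univ.filter (fun u => u ∉ D.image f ∧ s(f x, u) ∈ W)).card
      ≤ (D.filter (fun z => T.Adj x z)).card

lemma image_update {n : ℕ} {D : Finset (Fin n)} {f : Fin n → Fin n} {y u : Fin n} (hy : y ∉ D) :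
    (insert y D).image (Function.update f y u) = insert u (D.image f) := by
  ext a
  simp only [Finset.mem_image, Finset.mem_insert]
  constructor
  · rintro ⟨x, hx | hx, rfl⟩
    · subst hx; simp
    · right; exact ⟨x, hx, by rw [Function.update_of_ne]; rintro rfl; exact hy hx⟩
  · rintro (rfl | ⟨x, hx, rfl⟩)
    · exact ⟨y, Or.inl rfl, by simp⟩
    · exact ⟨x, Or.inr hx, by rw [Function.update_of_ne]; rintro rfl; exact hy hx⟩

lemma upd {n : ℕ} {D : Finset (Fin n)} {f : Fin n → Fin n} {y u x : Fin n} (hy : y ∉ D) (hx : x ∈ D) :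
    Function.update f y u x = f x := by
  rw [Function.update_of_ne]; rintro rfl; exact hy hx

lemma St.move {n : ℕ} {T : SimpleGraph (Fin n)} {ρ : ℕ} {D : Finset (Fin n)} {f : Fin n → Fin n}
    {Cl W R : Finset (Sym2 (Fin n))} (h : St T ρ D f Cl W R) {x y u u' : Fin n} (hx : x ∈ D)
    (hy : y ∉ D) (hxy : T.Adj x y) (hu : u ∉ D.image f) (hu' : u' ∉ D.image f) :
    St T ρ (insert y D) (Function.update f y u) (insert s(f x,u) Cl) (insert s(f x,u') W)
      (insert s(x,y) R) := by
  have hI := image_update (f := f) (u := u) hy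
  have hfx : f x ∈ D.image f := Finset.mem_image_of_mem f hx
  have hRD : ∀ a b, s(a,b) ∈ R → a ∈ D ∧ b ∈ D := fun a b hab =>
    ⟨(h.rT a b hab).2, (h.rT b a (by rwa [Sym2.eq_swap])).2⟩
  refine ⟨?_, ?_, ?_, ?_, ?_, ?_⟩
  · intro a ha b hb hab
    have key : ∀ c ∈ D, u ≠ f c := fun c hc e => hu (e ▸ Finset.mem_image_of_mem f hc)
    rcases Finset.mem_insert.1 ha with rfl | ha1 <;> rcases Finset.mem_insert.1 hb with rfl | hb1
    · rfl
    · rw [upd hy hb1] at hab; simp at hab; exact absurd hab (key _ hb1)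
    · rw [upd hy ha1] at hab; simp at hab; exact absurd hab.symm (key _ ha1)
    · rw [upd hy ha1, upd hy hb1] at hab; exact h.inj _ ha1 _ hb1 hab
  · rw [Finset.image_insert, h.cl]
    congr 1
    · simp [upd hy hx]
    · apply Finset.image_congr
      intro e he
      induction e using Sym2.ind with
      | _ a b =>
        have := hRD a b he
        simp [upd hy this.1, upd hy this.2]
  · intro a b hab
    rcases Finset.mem_insert.1 hab with hab | hab
    · rcases Sym2.eq_iff.1 hab with ⟨rfl, rfl⟩ | ⟨rfl, rfl⟩
      · exact ⟨hxy, by simp [hx]⟩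
      · exact ⟨hxy.symm, by simp⟩
    · exact ⟨(h.rT a b hab).1, by simp [(hRD a b hab).1]⟩
  · rw [Finset.card_insert_of_notMem hy, Finset.card_insert_of_notMem, ← h.rc]
    · omega
    · intro hh; exact hy (hRD _ _ hh).2
  · intro a b hab
    rw [hI]
    rcases Finset.mem_insert.1 hab with hab | hab
    · rcases Sym2.eq_iff.1 hab with ⟨rfl, rfl⟩ | ⟨rfl, rfl⟩ <;> simp only [Finset.mem_insert, hfx] <;> simp
    · simp only [Finset.mem_insert]; rcases h.w a b hab with h1 | h1 <;> simp [h1]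
  · intro z hz
    rw [hI]
    rcases Finset.mem_insert.1 hz with rfl | hz
    · have : (Finset.univ.filter (fun a => a ∉ insert u (D.image f) ∧ s(Function.update f z u z, a) ∈ insert s(f x,u') W)) = ∅ := by
        apply Finset.filter_eq_empty_iff.2
        rintro a - ⟨h1, h2⟩
        simp only [Function.update_self, Finset.mem_insert, not_or] at h1 h2
        rcases h2 with h2 | h2
        · rcases Sym2.eq_iff.1 h2 with ⟨rfl, rfl⟩ | ⟨rfl, rfl⟩
          · exact hu hfx
          · exact h1.2 hfx
        · rcases h.w _ _ h2 with h3 | h3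
          · exact hu h3
          · exact h1.2 h3
      rw [this]; simp
    · rw [upd hy hz]
      by_cases hzx : z = x
      · subst hzx
        have e1 : (insert y D).filter (fun a => T.Adj z a) = insert y (D.filter (fun a => T.Adj z a)) := by
          rw [Finset.filter_insert, if_pos hxy]
        rw [e1, Finset.card_insert_of_notMem (by simp [hy])]
        refine le_trans (Finset.card_le_card (t := insert u' (Finset.univ.filter (fun a => a ∉ D.image f ∧ s(f z, a) ∈ W))) ?_) ((Finset.card_insert_le _ _).trans (Nat.add_le_add_right (h.wu z hz) 1))
        intro a ha
        simp only [Finset.mem_filter, Finset.mem_univ, true_and, Finset.mem_insert, not_or] at ha ⊢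
        rcases ha.2 with h2 | h2
        · left; exact Sym2.congr_right.1 h2
        · right; exact ⟨ha.1.2, h2⟩
      · refine le_trans (Finset.card_le_card ?_) ((h.wu z hz).trans (Finset.card_le_card (Finset.filter_subset_filter _ (Finset.subset_insert _ _))))
        intro a ha
        simp only [Finset.mem_filter, Finset.mem_univ, true_and, Finset.mem_insert, not_or] at ha ⊢
        refine ⟨ha.1.2, ha.2.resolve_left ?_⟩
        intro h2
        rcases Sym2.eq_iff.1 h2 with ⟨h3, rfl⟩ | ⟨h3, rfl⟩
        · exact hzx (h.inj _ hz _ hx h3)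
        · exact ha.1.2 hfx

lemma St.cl_mem {n : ℕ} {T : SimpleGraph (Fin n)} {ρ : ℕ} {D : Finset (Fin n)} {f : Fin n → Fin n}
    {Cl W R : Finset (Sym2 (Fin n))} (h : St T ρ D f Cl W R) {a b : Fin n} (hab : s(a,b) ∈ Cl) :
    ∃ x ∈ D, ∃ y ∈ D, T.Adj x y ∧ f x = a ∧ f y = b := by
  rw [h.cl, Finset.mem_image] at hab
  obtain ⟨e, he, h2⟩ := hab
  induction e using Sym2.ind with
  | _ x y =>
    have h3 := h.rT x y he
    have h4 := h.rT y x (by rwa [Sym2.eq_swap])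
    rw [Sym2.map_mk, Sym2.eq_iff] at h2
    rcases h2 with ⟨h5, h6⟩ | ⟨h5, h6⟩
    · exact ⟨x, h3.2, y, h4.2, h3.1, h5, h6⟩
    · exact ⟨y, h4.2, x, h3.2, h4.1, h6, h5⟩

lemma St.cl_not {n : ℕ} {T : SimpleGraph (Fin n)} {ρ : ℕ} {D : Finset (Fin n)} {f : Fin n → Fin n}
    {Cl W R : Finset (Sym2 (Fin n))} (h : St T ρ D f Cl W R) {a b : Fin n} (hb : b ∉ D.image f) :
    s(a,b) ∉ Cl := by
  intro hab
  obtain ⟨x, hx, y, hy, -, -, rfl⟩ := h.cl_mem hab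
  exact hb (Finset.mem_image_of_mem f hy)

lemma St.play {n : ℕ} {T : SimpleGraph (Fin n)} {ρ t : ℕ} {D : Finset (Fin n)} {f : Fin n → Fin n}
    {Cl W R : Finset (Sym2 (Fin n))} (h : St T ρ D f Cl W R) {x y u1 u2 : Fin n} (hx : x ∈ D)
    (hy : y ∉ D) (hxy : T.Adj x y) (hu1 : u1 ∉ D.image f) (hu2 : u2 ∉ D.image f) (hne : u1 ≠ u2)
    (hf1 : s(f x, u1) ∉ W) (hf2 : s(f x, u2) ∉ W)
    (H : ∀ u u', u ∉ D.image f → u' ∉ D.image f → u ≠ u' → (u = u1 ∨ u = u2) → (u' = u1 ∨ u' = u2) →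
      St T ρ (insert y D) (Function.update f y u) (insert s(f x,u) Cl) (insert s(f x,u') W)
      (insert s(x,y) R) → WW T t (insert s(f x,u) Cl) (insert s(f x,u') W)) :
    WW T (t+1) Cl W := by
  have hfx : f x ∈ D.image f := Finset.mem_image_of_mem f hx
  refine WW_step (f x) u1 (f x) u2 ?_ ?_ ?_ (h.cl_not hu1) hf1 (h.cl_not hu2) hf2 ?_ ?_
  · rintro h1; exact hu1 (h1 ▸ hfx)
  · rintro h1; exact hu2 (h1 ▸ hfx)
  · intro h1; exact hne (Sym2.congr_right.1 h1)
  · exact H u1 u2 hu1 hu2 hne (by simp) (by simp) (h.move hx hy hxy hu1 hu2)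
  · exact H u2 u1 hu2 hu1 hne.symm (by simp) (by simp) (h.move hx hy hxy hu2 hu1)

lemma St.card_image {n : ℕ} {T : SimpleGraph (Fin n)} {ρ : ℕ} {D : Finset (Fin n)} {f : Fin n → Fin n}
    {Cl W R : Finset (Sym2 (Fin n))} (h : St T ρ D f Cl W R) : (D.image f).card = D.card :=
  Finset.card_image_of_injOn (fun x hx y hy e => h.inj x hx y hy e)

lemma St.pair {n : ℕ} {T : SimpleGraph (Fin n)} {ρ Δ : ℕ} {D : Finset (Fin n)} {f : Fin n → Fin n}
    {Cl W R : Finset (Sym2 (Fin n))} (h : St T ρ D f Cl W R)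
    (hΔ : ∀ x, (Finset.univ.filter (fun z => T.Adj x z)).card ≤ Δ) {x : Fin n} (hx : x ∈ D)
    (hc : D.card + Δ + 2 ≤ n) :
    ∃ u1 u2, u1 ∉ D.image f ∧ u2 ∉ D.image f ∧ u1 ≠ u2 ∧ s(f x, u1) ∉ W ∧ s(f x, u2) ∉ W := by
  have h1 : (Finset.univ.filter (fun u => u ∉ D.image f ∧ s(f x, u) ∈ W)).card ≤ Δ :=
    (h.wu x hx).trans ((Finset.card_le_card (Finset.filter_subset_filter _ (Finset.subset_univ _))).trans (hΔ x))
  have h2 := h.card_image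
  have h3 : 1 < (Finset.univ \ (D.image f ∪ Finset.univ.filter (fun u => u ∉ D.image f ∧ s(f x, u) ∈ W))).card := by
    rw [Finset.card_sdiff_of_subset (Finset.subset_univ _), Finset.card_univ, Fintype.card_fin]
    have := Finset.card_union_le (D.image f) (Finset.univ.filter (fun u => u ∉ D.image f ∧ s(f x, u) ∈ W))
    omega
  obtain ⟨a, ha, b, hb, hab⟩ := Finset.one_lt_card.1 h3
  simp only [Finset.mem_sdiff, Finset.mem_univ, true_and, Finset.mem_union, Finset.mem_filter, not_or, not_and] at ha hb
  exact ⟨a, b, ha.1, hb.1, hab, ha.2 ha.1, hb.2 hb.1⟩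

structure Fr {n : ℕ} (D : Finset (Fin n)) (f : Fin n → Fin n) (W : Finset (Sym2 (Fin n))) : Prop where
  f1 : ∀ u a b, u ∉ D.image f → s(u,a) ∈ W → s(u,b) ∈ W → a = b
  f2 : ∀ x ∈ D, ∀ z ∈ D, s(f x, f z) ∉ W
  f3 : W.card ≤ D.card

lemma St.fresh {n : ℕ} {T : SimpleGraph (Fin n)} {ρ : ℕ} {D : Finset (Fin n)} {f : Fin n → Fin n}
    {Cl W R : Finset (Sym2 (Fin n))} (h : St T ρ D f Cl W R) (hF : Fr D f W)
    (hc : 2 * D.card + 2 ≤ n) :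
    ∃ u1 u2, u1 ∉ D.image f ∧ u2 ∉ D.image f ∧ u1 ≠ u2 ∧ (∀ a, s(a, u1) ∉ W) ∧ (∀ a, s(a, u2) ∉ W) := by
  have h1 : (Finset.univ.filter (fun u => u ∉ D.image f ∧ ∃ a, s(a, u) ∈ W)).card ≤ W.card := by
    apply Finset.card_le_card_of_injOn (fun u => if h : ∃ a, s(a, u) ∈ W then s(h.choose, u) else s(u,u))
    · intro u hu
      simp only [Finset.coe_filter, Finset.mem_univ, true_and, Set.mem_setOf_eq] at hu
      simp only [dif_pos hu.2]
      exact hu.2.choose_spec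
    · intro u hu v hv huv
      simp only [Finset.coe_filter, Finset.mem_univ, true_and, Set.mem_setOf_eq] at hu hv
      simp only [dif_pos hu.2, dif_pos hv.2] at huv
      rcases Sym2.eq_iff.1 huv with ⟨_, h3⟩ | ⟨h3, h4⟩
      · exact h3
      · have := hu.2.choose_spec
        rw [h3] at this
        rcases h.w _ _ this with h5 | h5
        · exact absurd h5 hv.1
        · exact absurd h5 hu.1
  have h2 := h.card_image
  have h4 := hF.f3
  have h3 : 1 < (Finset.univ \ (D.image f ∪ Finset.univ.filter (fun u => u ∉ D.image f ∧ ∃ a, s(a, u) ∈ W))).card := by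
    rw [Finset.card_sdiff_of_subset (Finset.subset_univ _), Finset.card_univ, Fintype.card_fin]
    have := Finset.card_union_le (D.image f) (Finset.univ.filter (fun u => u ∉ D.image f ∧ ∃ a, s(a, u) ∈ W))
    omega
  obtain ⟨a, ha, b, hb, hab⟩ := Finset.one_lt_card.1 h3
  simp only [Finset.mem_sdiff, Finset.mem_univ, true_and, Finset.mem_union, Finset.mem_filter, not_or, not_and, not_exists] at ha hb
  exact ⟨a, b, ha.1, hb.1, hab, ha.2 ha.1, hb.2 hb.1⟩

lemma Fr.move {n : ℕ} {D : Finset (Fin n)} {f : Fin n → Fin n} {W : Finset (Sym2 (Fin n))}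
    (hF : Fr D f W) {x y u u' : Fin n} (hx : x ∈ D) (hy : y ∉ D)
    (hu : u ∉ D.image f) (hu' : u' ∉ D.image f) (hne : u ≠ u') (h1 : ∀ a, s(a, u) ∉ W)
    (h2 : ∀ a, s(a, u') ∉ W) :
    Fr (insert y D) (Function.update f y u) (insert s(f x,u') W) := by
  have hfx : f x ∈ D.image f := Finset.mem_image_of_mem f hx
  refine ⟨?_, ?_, ?_⟩
  · intro v a b hv ha hb
    rw [image_update hy] at hv
    simp only [Finset.mem_insert, not_or] at hv
    have key : ∀ c, s(v,c) = s(f x,u') → v = u' ∧ c = f x := by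
      intro c hc
      rcases Sym2.eq_iff.1 hc with ⟨rfl, rfl⟩ | ⟨rfl, rfl⟩
      · exact absurd hfx hv.2
      · exact ⟨rfl, rfl⟩
    rcases Finset.mem_insert.1 ha with ha | ha <;> rcases Finset.mem_insert.1 hb with hb | hb
    · rw [(key _ ha).2, (key _ hb).2]
    · rw [(key _ ha).1, Sym2.eq_swap] at hb; exact absurd hb (h2 _)
    · rw [(key _ hb).1, Sym2.eq_swap] at ha; exact absurd ha (h2 _)
    · exact hF.f1 v a b hv.2 ha hb
  · intro a ha b hb hab
    have ha' : Function.update f y u a ∈ insert u (D.image f) := by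
      rw [← image_update hy]; exact Finset.mem_image_of_mem _ ha
    have hb' : Function.update f y u b ∈ insert u (D.image f) := by
      rw [← image_update hy]; exact Finset.mem_image_of_mem _ hb
    rcases Finset.mem_insert.1 hab with hab | hab
    · have : u' ∈ insert u (D.image f) := by
        rcases Sym2.eq_iff.1 hab with ⟨h3, h4⟩ | ⟨h3, h4⟩
        · rw [← h4]; exact hb'
        · rw [← h3]; exact ha'
      rcases Finset.mem_insert.1 this with h3 | h3
      · exact hne h3.symm
      · exact hu' h3
    · rcases Finset.mem_insert.1 ha with rfl | ha1
      · rw [Function.update_self, Sym2.eq_swap] at hab; exact h1 _ hab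
      · rcases Finset.mem_insert.1 hb with rfl | hb1
        · rw [Function.update_self] at hab; exact h1 _ hab
        · rw [upd hy ha1, upd hy hb1] at hab; exact hF.f2 _ ha1 _ hb1 hab
  · rw [Finset.card_insert_of_notMem hy]
    exact (Finset.card_insert_le _ _).trans (Nat.add_le_add_right hF.f3 1)

lemma phase1 {n : ℕ} {T : SimpleGraph (Fin n)} {ρ t : ℕ} (X D0 : Finset (Fin n))
    (hX : 2 * X.card + 2 ≤ n)
    (hgrow : ∀ D ⊆ X, D0 ⊆ D → D ≠ X → ∃ x ∈ D, ∃ y ∈ X, y ∉ D ∧ T.Adj x y)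
    (H : ∀ f Cl W R, St T ρ X f Cl W R → Fr X f W → WW T t Cl W) :
    ∀ j D f Cl W R, X.card = D.card + j → D ⊆ X → D0 ⊆ D → St T ρ D f Cl W R → Fr D f W →
      WW T (t + j) Cl W := by
  intro j
  induction j with
  | zero =>
    intro D f Cl W R hc hDX _ hS hF
    have : D = X := Finset.eq_of_subset_of_card_le hDX (by omega)
    subst this
    exact H _ _ _ _ hS hF
  | succ j ih =>
    intro D f Cl W R hc hDX hD0 hS hF
    have hne : D ≠ X := by rintro rfl; omega
    obtain ⟨x, hx, y, hyX, hy, hxy⟩ := hgrow D hDX hD0 hne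
    obtain ⟨u1, u2, a1, a2, a3, a4, a5⟩ := hS.fresh hF (by omega)
    rw [← add_assoc]
    refine hS.play hx hy hxy a1 a2 a3 (a4 _) (a5 _) ?_
    intro u u' hu hu' huu h1 h2 hS'
    refine ih _ _ _ _ _ ?_ ?_ ?_ hS' ?_
    · rw [Finset.card_insert_of_notMem hy]; omega
    · exact Finset.insert_subset hyX hDX
    · exact hD0.trans (Finset.subset_insert _ _)
    · refine hF.move hx hy hu hu' huu ?_ ?_
      · rcases h1 with rfl | rfl <;> assumption
      · rcases h2 with rfl | rfl <;> assumption

lemma prot_move {n : ℕ} {D S : Finset (Fin n)} {f f0 : Fin n → Fin n} {W W0 : Finset (Sym2 (Fin n))}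
    {x u' : Fin n} (hu' : u' ∉ D.image f) (hSD : S ⊆ D) (hx : ∀ s ∈ S, f s ≠ f x)
    (hf : ∀ s ∈ S, f s = f0 s)
    (h : ∀ s ∈ S, ∀ a, s(f0 s, a) ∈ W → s(f0 s, a) ∈ W0) :
    ∀ s ∈ S, ∀ a, s(f0 s, a) ∈ insert s(f x, u') W → s(f0 s, a) ∈ W0 := by
  intro s hs a ha
  rcases Finset.mem_insert.1 ha with ha | ha
  · exfalso
    rw [← hf s hs] at ha
    rcases Sym2.eq_iff.1 ha with ⟨h1, h2⟩ | ⟨h1, h2⟩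
    · exact hx s hs h1
    · exact hu' (h1 ▸ Finset.mem_image_of_mem f (hSD hs))
  · exact h s hs a ha

lemma phase2 {n : ℕ} {T : SimpleGraph (Fin n)} {ρ t Δ : ℕ}
    (hΔ : ∀ x, (Finset.univ.filter (fun z => T.Adj x z)).card ≤ Δ) (X D0 S : Finset (Fin n))
    (f0 : Fin n → Fin n) (W0 : Finset (Sym2 (Fin n)))
    (hX : X.card + Δ + 2 ≤ n)
    (hgrow : ∀ D ⊆ X, D0 ⊆ D → D ≠ X → ∃ x ∈ D, ∃ y ∈ X, y ∉ D ∧ T.Adj x y)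
    (hS0 : S ⊆ D0) (hSn : ∀ s ∈ S, ∀ y ∈ X, T.Adj s y → y ∈ D0)
    (H : ∀ f Cl W R, St T ρ X f Cl W R → (∀ x ∈ D0, f x = f0 x) →
      (∀ s ∈ S, ∀ a, s(f0 s, a) ∈ W → s(f0 s, a) ∈ W0) → WW T t Cl W) :
    ∀ j D f Cl W R, X.card = D.card + j → D ⊆ X → D0 ⊆ D → St T ρ D f Cl W R →
      (∀ x ∈ D0, f x = f0 x) →
      (∀ s ∈ S, ∀ a, s(f0 s, a) ∈ W → s(f0 s, a) ∈ W0) →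
      WW T (t + j) Cl W := by
  intro j
  induction j with
  | zero =>
    intro D f Cl W R hc hDX _ hS hF
    have : D = X := Finset.eq_of_subset_of_card_le hDX (by omega)
    subst this
    exact H _ _ _ _ hS hF
  | succ j ih =>
    intro D f Cl W R hc hDX hD0 hS hF hP
    have hne : D ≠ X := by rintro rfl; omega
    obtain ⟨x, hx, y, hyX, hy, hxy⟩ := hgrow D hDX hD0 hne
    obtain ⟨u1, u2, a1, a2, a3, a4, a5⟩ := hS.pair hΔ hx (by omega)
    rw [← add_assoc]
    refine hS.play hx hy hxy a1 a2 a3 a4 a5 ?_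
    intro u u' hu hu' huu h1 h2 hS'
    refine ih _ _ _ _ _ ?_ ?_ ?_ hS' ?_ ?_
    · rw [Finset.card_insert_of_notMem hy]; omega
    · exact Finset.insert_subset hyX hDX
    · exact hD0.trans (Finset.subset_insert _ _)
    · intro z hz
      rw [upd hy (hD0 hz)]; exact hF z hz
    · refine prot_move hu' (hS0.trans hD0) ?_ (fun s hs => hF s (hS0 hs)) hP
      intro s hs e
      have := hS.inj _ (hD0 (hS0 hs)) _ hx e
      subst this
      exact hy (hD0 (hSn s hs y hyX hxy))

lemma St.init {n : ℕ} {T : SimpleGraph (Fin n)} (r : Fin n) : St T 1 {r} id ∅ ∅ ∅ := by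
  refine ⟨?_, ?_, ?_, ?_, ?_, ?_⟩ <;> simp

lemma Fr.init {n : ℕ} (r : Fin n) : Fr {r} id ∅ := by
  refine ⟨?_, ?_, ?_⟩ <;> simp

lemma swp {n : ℕ} {S : Finset (Sym2 (Fin n))} {a b : Fin n} (h : s(a,b) ∈ S) : s(b,a) ∈ S := by
  rwa [Sym2.eq_swap]

lemma R_full {n : ℕ} {T : SimpleGraph (Fin n)} (hT : T.IsTree) (R P : Finset (Sym2 (Fin n)))
    (hR : ∀ x y, s(x,y) ∈ R → T.Adj x y) (hP : ∀ x y, s(x,y) ∈ P → T.Adj x y)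
    (hd : Disjoint R P) (hc : n ≤ R.card + P.card + 1) :
    ∀ a b, T.Adj a b → s(a,b) ∈ R ∨ s(a,b) ∈ P := by
  intro a b hab
  have h1 : R ∪ P ⊆ T.edgeFinset := by
    intro e he
    induction e using Sym2.ind with
    | _ x y =>
      rw [SimpleGraph.mem_edgeFinset, SimpleGraph.mem_edgeSet]
      rcases Finset.mem_union.1 he with h | h
      · exact hR _ _ h
      · exact hP _ _ h
  have h2 := hT.card_edgeFinset
  simp only [Fintype.card_fin] at h2
  have h3 : R ∪ P = T.edgeFinset := by
    apply Finset.eq_of_subset_of_card_le h1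
    rw [Finset.card_union_of_disjoint hd]; omega
  have : s(a,b) ∈ R ∪ P := by rw [h3, SimpleGraph.mem_edgeFinset, SimpleGraph.mem_edgeSet]; exact hab
  exact Finset.mem_union.1 this

lemma endA_sub {n : ℕ} {T : SimpleGraph (Fin n)} {f : Fin n → Fin n} {Cl W : Finset (Sym2 (Fin n))}
    {p y q z u : Fin n} (hinj : ∀ a b, a ≠ y → b ≠ y → f a = f b → a = b)
    (hu : ∀ a, a ≠ y → f a ≠ u)
    (hedge : ∀ a b, T.Adj a b → s(a,b) = s(p,y) ∨ s(f a, f b) ∈ Cl)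
    (hpy : p ≠ y) (hqy : q ≠ y) (hzy : z ≠ y) (hpz : p ≠ z) (hqz : q ≠ z)
    (hy : ∀ x, T.Adj y x → x = p) (hz : ∀ x, T.Adj z x → x = q)
    (hq : s(f q, u) ∈ Cl)
    (h1 : s(f p, u) ∉ Cl) (h2 : s(f p, u) ∉ W) (h3 : s(f p, f z) ∉ Cl) (h4 : s(f p, f z) ∉ W) :
    WW T 1 Cl W := by
  have hne : u ≠ f z := fun e => hu z hzy e.symm
  refine WW_step (f p) u (f p) (f z) (hu p hpy) (fun e => hpz (hinj _ _ hpy hzy e))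
    (fun e => hne (Sym2.congr_right.1 e)) h1 h2 h3 h4 ?_ ?_
  · apply WW_win (Function.update f y u)
    · intro a b hab
      by_cases ha : a = y <;> by_cases hb : b = y
      · rw [ha, hb]
      · subst ha; rw [Function.update_self, Function.update_of_ne hb] at hab
        exact absurd hab.symm (hu b hb)
      · subst hb; rw [Function.update_self, Function.update_of_ne ha] at hab
        exact absurd hab (hu a ha)
      · rw [Function.update_of_ne hb, Function.update_of_ne ha] at hab
        exact hinj _ _ ha hb hab
    · intro a b hab
      by_cases ha : a = y
      · subst ha; have := hy b hab; subst this
        rw [Function.update_self, Function.update_of_ne hpy, Sym2.eq_swap]; simp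
      · by_cases hb : b = y
        · subst hb; have := hy a hab.symm; subst this
          rw [Function.update_self, Function.update_of_ne hpy]; simp
        · rw [Function.update_of_ne hb, Function.update_of_ne ha]
          rcases hedge a b hab with h | h
          · exfalso; rcases Sym2.eq_iff.1 h with ⟨_, h⟩ | ⟨h, _⟩
            · exact hb h
            · exact ha h
          · exact Finset.mem_insert_of_mem h
  · have ev : ∀ a, a ≠ y → a ≠ z → Function.update (Function.update f z u) y (f z) a = f a := by
      intro a h1 h2; rw [Function.update_of_ne h1, Function.update_of_ne h2]
    have ey : Function.update (Function.update f z u) y (f z) y = f z := by simp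
    have ez : Function.update (Function.update f z u) y (f z) z = u := by
      rw [Function.update_of_ne hzy, Function.update_self]
    apply WW_win (Function.update (Function.update f z u) y (f z))
    · intro a b hab
      by_cases ha : a = y <;> by_cases hb : b = y <;> by_cases ha' : a = z <;> by_cases hb' : b = z
      all_goals first
        | (subst ha; subst hb; rfl)
        | (subst ha'; subst hb'; rfl)
        | (exfalso; exact hzy (ha'.symm.trans ha))
        | (exfalso; exact hzy (hb'.symm.trans hb))
        | skip
      · subst ha; subst hb'; rw [ey, ez] at hab; exact absurd hab.symm hne
      · subst ha; rw [ey, ev b hb hb'] at hab; exact absurd (hinj _ _ hzy hb hab).symm hb'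
      · subst hb; subst ha'; rw [ey, ez] at hab; exact absurd hab hne
      · subst hb; rw [ey, ev a ha ha'] at hab; exact absurd (hinj _ _ ha hzy hab) ha'
      · subst ha'; rw [ez, ev b hb hb'] at hab; exact absurd hab.symm (hu b hb)
      · subst hb'; rw [ez, ev a ha ha'] at hab; exact absurd hab (hu a ha)
      · rw [ev a ha ha', ev b hb hb'] at hab; exact hinj _ _ ha hb hab
    · have key : ∀ a b, T.Adj a b → a = y ∨ a = z → s(Function.update (Function.update f z u) y (f z) a, Function.update (Function.update f z u) y (f z) b) ∈ insert s(f p, f z) Cl := by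
        intro a b hab h
        rcases h with rfl | rfl
        · have := hy b hab; subst this
          rw [ey, ev _ hpy hpz, Sym2.eq_swap]; simp
        · have := hz b hab; subst this
          rw [ez, ev _ hqy hqz]; exact Finset.mem_insert_of_mem (swp hq)
      intro a b hab
      by_cases ha : a = y ∨ a = z
      · exact key a b hab ha
      · by_cases hb : b = y ∨ b = z
        · exact swp (key b a hab.symm hb)
        · push Not at ha hb
          rw [ev a ha.1 ha.2, ev b hb.1 hb.2]
          rcases hedge a b hab with h | h
          · exfalso; rcases Sym2.eq_iff.1 h with ⟨_, h⟩ | ⟨h, _⟩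
            · exact hb.1 h
            · exact ha.1 h
          · exact Finset.mem_insert_of_mem h

lemma endA {n : ℕ} {T : SimpleGraph (Fin n)} {f : Fin n → Fin n} {Cl W : Finset (Sym2 (Fin n))}
    {p y q z q' z' u : Fin n} (hinj : ∀ a b, a ≠ y → b ≠ y → f a = f b → a = b)
    (hu : ∀ a, a ≠ y → f a ≠ u)
    (hedge : ∀ a b, T.Adj a b → s(a,b) = s(p,y) ∨ s(f a, f b) ∈ Cl)
    (hpy : p ≠ y) (hqy : q ≠ y) (hzy : z ≠ y) (hpz : p ≠ z) (hqz : q ≠ z)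
    (hqy' : q' ≠ y) (hzy' : z' ≠ y) (hpz' : p ≠ z') (hqz' : q' ≠ z')
    (hqq : q ≠ q') (hpq : p ≠ q) (hpq' : p ≠ q')
    (hy : ∀ x, T.Adj y x → x = p) (hz : ∀ x, T.Adj z x → x = q) (hz' : ∀ x, T.Adj z' x → x = q')
    (hc : ∀ a, s(a, u) ∉ Cl)
    (hq : s(f q, u) ∉ W) (hq' : s(f q', u) ∉ W) (hpu : s(f p, u) ∉ W)
    (h3 : s(f p, f z) ∉ Cl) (h4 : s(f p, f z) ∉ W) (h3' : s(f p, f z') ∉ Cl) (h4' : s(f p, f z') ∉ W) :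
    WW T 2 Cl W := by
  have e1 : ∀ a b, a ≠ y → b ≠ y → a ≠ b → s(f a, u) ≠ s(f b, u) := by
    intro a b ha hb hab e
    exact hab (hinj _ _ ha hb (Sym2.congr_left.1 e))
  have e2 : ∀ a b c, a ≠ y → b ≠ y → c ≠ y → s(f a, f b) ≠ s(f c, u) := by
    intro a b c ha hb hc e
    rcases Sym2.eq_iff.1 e with ⟨_, h⟩ | ⟨h, _⟩
    · exact hu _ hb h
    · exact hu _ ha h
  refine WW_step (f q) u (f q') u (hu _ hqy) (hu _ hqy') (e1 _ _ hqy hqy' hqq) (hc _) hq (hc _) hq' ?_ ?_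
  · refine endA_sub (p := p) (q := q) (z := z) hinj hu (fun a b hab => (hedge a b hab).imp_right (Finset.mem_insert_of_mem)) hpy hqy hzy hpz hqz hy hz (by simp) ?_ ?_ ?_ ?_
    · simp [e1 _ _ hpy hqy hpq, hc]
    · simp [e1 _ _ hpy hqy' hpq', hpu]
    · simp [e2 _ _ _ hpy hzy hqy, h3]
    · simp [e2 _ _ _ hpy hzy hqy', h4]
  · refine endA_sub (p := p) (q := q') (z := z') hinj hu (fun a b hab => (hedge a b hab).imp_right (Finset.mem_insert_of_mem)) hpy hqy' hzy' hpz' hqz' hy hz' (by simp) ?_ ?_ ?_ ?_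
    · simp [e1 _ _ hpy hqy' hpq', hc]
    · simp [e1 _ _ hpy hqy hpq, hpu]
    · simp [e2 _ _ _ hpy hzy' hqy', h3']
    · simp [e2 _ _ _ hpy hzy' hqy, h4']

def condA (Δ r b : ℕ) : Prop := b = 0 ∨ (b ≤ 1 ∧ Δ + 2 ≤ r) ∨ b + 2 * Δ + 6 ≤ 2 * r

lemma chooseA {n : ℕ} {Δ r : ℕ} (hr : 2 ≤ r) (S U : Finset (Fin n)) (bad : Fin n → Fin n → Prop)
    (hS : S.card = r) (hU : U.card = r)
    (hΔ : ∀ v ∈ S, (U.filter (fun u => bad v u)).card ≤ Δ)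
    (hc : condA Δ r (U.filter (fun u => ∃ s ∈ S, bad s u)).card) :
    ∃ v ∈ S, ∃ u1 ∈ U, ∃ u2 ∈ U, u1 ≠ u2 ∧ ¬ bad v u1 ∧ ¬ bad v u2 ∧
      ∀ u, (u = u1 ∨ u = u2) → ∀ b', b' ≤ (((U.filter (fun u => ∃ s ∈ S, bad s u)) \
        (U.filter (fun u => bad v u))).erase u).card → condA Δ (r-1) b' := by
  set B := U.filter (fun u => ∃ s ∈ S, bad s u) with hB
  by_cases hB0 : B = ∅
  · obtain ⟨v, hv⟩ : S.Nonempty := Finset.card_pos.1 (by omega)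
    obtain ⟨a, ha, b, hb, hab⟩ := Finset.one_lt_card.1 (show 1 < U.card by omega)
    have key : ∀ u ∈ U, ¬ bad v u := by
      intro u hu hbad
      have : u ∈ B := by rw [hB, Finset.mem_filter]; exact ⟨hu, v, hv, hbad⟩
      simp [hB0] at this
    refine ⟨v, hv, a, ha, b, hb, hab, key a ha, key b hb, ?_⟩
    intro u _ b' hb'
    rw [hB0] at hb'
    left; simpa using hb'
  · obtain ⟨w, hw⟩ := Finset.nonempty_iff_ne_empty.2 hB0
    obtain ⟨hwU, v, hv, hvw⟩ := Finset.mem_filter.1 hw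
    have hsub : U.filter (fun u => bad v u) ⊆ B := by
      intro u hu
      rw [Finset.mem_filter] at hu
      rw [hB, Finset.mem_filter]; exact ⟨hu.1, v, hv, hu.2⟩
    have hpos : 0 < (U.filter (fun u => bad v u)).card :=
      Finset.card_pos.2 ⟨w, Finset.mem_filter.2 ⟨hwU, hvw⟩⟩
    have hsd := Finset.card_sdiff_add_card_eq_card hsub
    have hΔv := hΔ v hv
    refine ⟨v, hv, ?_⟩
    by_cases h2 : 1 < (B \ U.filter (fun u => bad v u)).card
    · obtain ⟨a, ha, b, hb, hab⟩ := Finset.one_lt_card.1 h2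
      have key : ∀ u ∈ B \ U.filter (fun u => bad v u), u ∈ U ∧ ¬ bad v u := by
        intro u hu
        have h1 := Finset.mem_sdiff.1 hu
        have hU' := (Finset.mem_filter.1 h1.1).1
        exact ⟨hU', fun h => h1.2 (Finset.mem_filter.2 ⟨hU', h⟩)⟩
      refine ⟨a, (key a ha).1, b, (key b hb).1, hab, (key a ha).2, (key b hb).2, ?_⟩
      intro u hu b' hb'
      have hu' : u ∈ B \ U.filter (fun u => bad v u) := by rcases hu with rfl | rfl <;> assumption
      rw [Finset.card_erase_of_mem hu'] at hb'
      unfold condA at *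
      omega
    · have h3 : 1 < (U \ U.filter (fun u => bad v u)).card := by
        rw [Finset.card_sdiff_of_subset (Finset.filter_subset _ _)]
        unfold condA at hc
        omega
      obtain ⟨a, ha, b, hb, hab⟩ := Finset.one_lt_card.1 h3
      simp only [Finset.mem_sdiff, Finset.mem_filter, not_and] at ha hb
      refine ⟨a, ha.1, b, hb.1, hab, ha.2 ha.1, hb.2 hb.1, ?_⟩
      intro u hu b' hb'
      have := Finset.card_erase_le (s := B \ U.filter (fun u => bad v u)) (a := u)
      unfold condA at *
      omega

lemma finalA {n : ℕ} {T : SimpleGraph (Fin n)} {Δ : ℕ} (hT : T.IsTree)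
    (hΔ : ∀ x, (Finset.univ.filter (fun z => T.Adj x z)).card ≤ Δ) (A Q : Finset (Fin n))
    (l : Fin n → Fin n) (hl : ∀ s ∈ A, T.Adj s (l s)) (hl' : ∀ s ∈ A, ∀ x, T.Adj (l s) x → x = s)
    (hA : ∀ s ∈ A, ∀ s' ∈ A, s ≠ l s') (hQA : Q ⊆ A) (hQ : Q.card = 3) :
    ∀ (r : ℕ) (S : Finset (Fin n)) f Cl W R, S.card = r → 1 ≤ r → S ⊆ A → Disjoint S Q →
      St T 1 (Finset.univ \ S.image l) f Cl W R →
      (∀ u, u ∉ (Finset.univ \ S.image l).image f → ∀ s ∈ S ∪ Q, ∀ s' ∈ S ∪ Q,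
        s(f s, u) ∈ W → s(f s', u) ∈ W → s = s') →
      (∀ s ∈ S, ∀ q ∈ Q, s(f s, f (l q)) ∉ W) →
      condA Δ r ((Finset.univ \ (Finset.univ \ S.image l).image f).filter
        (fun u => ∃ s ∈ S, s(f s, u) ∈ W)).card →
      WW T (r + 1) Cl W := by
  have linj : ∀ s ∈ A, ∀ s' ∈ A, l s = l s' → s = s' := by
    intro s hs s' hs' e
    exact hl' s' hs' s (e ▸ (hl s hs).symm)
  intro r
  induction r with
  | zero => intro S f Cl W R _ h; omega
  | succ r ih =>
  intro S f Cl W R hr hr1 hSA hSQ hSt ha hb hc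
  have hAD : ∀ s ∈ A, s ∈ Finset.univ \ S.image l := by
    intro s hs
    simp only [Finset.mem_sdiff, Finset.mem_univ, true_and, Finset.mem_image, not_exists, not_and]
    intro s' hs' e
    exact hA s hs s' (hSA hs') e.symm
  have hlQ : ∀ q ∈ Q, l q ∈ Finset.univ \ S.image l := by
    intro q hq
    simp only [Finset.mem_sdiff, Finset.mem_univ, true_and, Finset.mem_image, not_exists, not_and]
    intro s' hs' e
    have := linj _ (hSA hs') _ (hQA hq) e
    subst this
    exact (Finset.disjoint_left.1 hSQ hs') hq
  have hcardl : (S.image l).card = S.card :=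
    Finset.card_image_of_injOn (fun x hx y hy e => linj x (hSA hx) y (hSA hy) e)
  have hSn : S.card ≤ n := by simpa using Finset.card_le_univ S
  have hDc : (Finset.univ \ S.image l).card = n - (r+1) := by
    rw [Finset.card_sdiff_of_subset (Finset.subset_univ _), Finset.card_univ, Fintype.card_fin]; omega
  have hU : (Finset.univ \ (Finset.univ \ S.image l).image f).card = r + 1 := by
    rw [Finset.card_sdiff_of_subset (Finset.subset_univ _), Finset.card_univ, Fintype.card_fin, hSt.card_image]
    omega
  rcases Nat.eq_zero_or_pos r with rfl | hrpos
  · -- endgame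
    have hb0 : ((Finset.univ \ (Finset.univ \ S.image l).image f).filter
        (fun u => ∃ s ∈ S, s(f s, u) ∈ W)).card = 0 := by
      unfold condA at hc; omega
    rw [Finset.card_eq_zero, Finset.filter_eq_empty_iff] at hb0
    obtain ⟨p, rfl⟩ := Finset.card_eq_one.1 hr
    obtain ⟨u, hu⟩ := Finset.card_eq_one.1 hU
    have hD : ∀ a, a ∈ Finset.univ \ ({p} : Finset (Fin n)).image l ↔ a ≠ l p := by
      intro a; simp
    have huD : u ∉ (Finset.univ \ ({p} : Finset (Fin n)).image l).image f := by
      have : u ∈ ({u} : Finset (Fin n)) := by simp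
      rw [← hu, Finset.mem_sdiff] at this
      exact this.2
    have hpA : p ∈ A := hSA (by simp)
    -- two good q
    have hQ2 : 1 < (Q.filter (fun q => s(f q, u) ∉ W)).card := by
      have h1 := Finset.card_filter_add_card_filter_not (s := Q) (fun q => s(f q, u) ∈ W)
      have h2 : (Q.filter (fun q => s(f q, u) ∈ W)).card ≤ 1 := by
        rw [Finset.card_le_one]
        intro a h3 b h4
        rw [Finset.mem_filter] at h3 h4
        exact ha u huD a (by simp [h3.1]) b (by simp [h4.1]) h3.2 h4.2
      omega
    obtain ⟨q, hq, q', hq', hqq⟩ := Finset.one_lt_card.1 hQ2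
    rw [Finset.mem_filter] at hq hq'
    have hRadj : ∀ x y, s(x,y) ∈ R → T.Adj x y := fun x y h => (hSt.rT x y h).1
    have hfull := R_full hT R {s(p, l p)} hRadj (by
        intro x y h
        rw [Finset.mem_singleton] at h
        rcases Sym2.eq_iff.1 h with ⟨rfl, rfl⟩ | ⟨rfl, rfl⟩
        · exact hl _ hpA
        · exact (hl _ hpA).symm) (by
        rw [Finset.disjoint_singleton_right]
        intro h
        exact (hD _).1 (hSt.rT _ _ (swp h)).2 rfl) (by
        have := hSt.rc
        rw [hDc] at this
        simp only [Finset.card_singleton]; omega)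
    have hedge : ∀ a b, T.Adj a b → s(a,b) = s(p,l p) ∨ s(f a, f b) ∈ Cl := by
      intro a b hab
      rcases hfull a b hab with h | h
      · right; rw [hSt.cl]; exact Finset.mem_image.2 ⟨_, h, rfl⟩
      · left; simpa using h
    have hne : ∀ s ∈ A, s ≠ l p := fun s hs => hA s hs p hpA
    have hpq : ∀ q ∈ Q, p ≠ q := by
      rintro q hq rfl
      exact Finset.disjoint_left.1 hSQ (by simp) hq
    have hzcl : ∀ q ∈ Q, s(f p, f (l q)) ∉ Cl := by
      intro q hq h
      obtain ⟨x, hx, y, hy, hxy, h5, h6⟩ := hSt.cl_mem h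
      have e1 := hSt.inj _ hx _ (hAD p hpA) h5
      have e2 := hSt.inj _ hy _ (hlQ q hq) h6
      subst e1; subst e2
      exact hpq q hq (hl' q (hQA hq) _ hxy.symm)
    refine endA (p := p) (y := l p) (q := q) (z := l q) (q' := q') (z' := l q') (u := u) (f := f) ?_ ?_ hedge
      (hne p hpA) (hne q (hQA hq.1)) ((hD _).1 (hlQ q hq.1)) (hA p hpA q (hQA hq.1)) (hA q (hQA hq.1) q (hQA hq.1))
      (hne q' (hQA hq'.1)) ((hD _).1 (hlQ q' hq'.1)) (hA p hpA q' (hQA hq'.1)) (hA q' (hQA hq'.1) q' (hQA hq'.1))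
      hqq (hpq q hq.1) (hpq q' hq'.1) (hl' p hpA) (hl' q (hQA hq.1)) (hl' q' (hQA hq'.1))
      (fun a => hSt.cl_not huD) hq.2 hq'.2 ?_ (hzcl q hq.1) (hb p (by simp) q hq.1) (hzcl q' hq'.1) (hb p (by simp) q' hq'.1)
    · intro a b h1 h2 e
      exact hSt.inj a ((hD a).2 h1) b ((hD b).2 h2) e
    · intro a h1 e
      exact huD (e ▸ Finset.mem_image_of_mem f ((hD a).2 h1))
    · intro h
      exact hb0 (x := u) (by rw [hu]; simp) ⟨p, by simp, h⟩
  · obtain ⟨v, hv, u1, hu1, u2, hu2, hne, hf1, hf2, hcond⟩ := chooseA (by omega) S _ (fun s u => s(f s, u) ∈ W) hr hU (by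
      intro v hv
      have h1 : (Finset.univ.filter (fun u => u ∉ (Finset.univ \ S.image l).image f ∧ s(f v, u) ∈ W)).card ≤ Δ :=
        (hSt.wu v (hAD v (hSA hv))).trans ((Finset.card_le_card (Finset.filter_subset_filter _ (Finset.subset_univ _))).trans (hΔ v))
      refine le_trans (Finset.card_le_card ?_) h1
      intro u hu
      simp only [Finset.mem_filter, Finset.mem_sdiff, Finset.mem_univ, true_and] at hu ⊢
      exact hu) (by convert hc)
    have hvA := hSA hv
    have hlv : l v ∉ Finset.univ \ S.image l := by simp; exact ⟨v, hv, rfl⟩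
    refine hSt.play (x := v) (y := l v) (hAD v hvA) hlv (hl v hvA) (Finset.mem_sdiff.1 hu1).2 (Finset.mem_sdiff.1 hu2).2 hne hf1 hf2 ?_
    intro u u' hu hu' huu h1 h2 hS'
    have hDe : insert (l v) (Finset.univ \ S.image l) = Finset.univ \ (S.erase v).image l := by
      ext a
      simp only [Finset.mem_insert, Finset.mem_sdiff, Finset.mem_univ, true_and, Finset.mem_image, Finset.mem_erase, not_exists, not_and]
      constructor
      · rintro (rfl | h)
        · rintro s ⟨hs1, hs2⟩ e
          exact hs1 (linj _ (hSA hs2) _ hvA e)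
        · rintro s ⟨hs1, hs2⟩; exact h s hs2
      · intro h
        by_cases e : a = l v
        · left; exact e
        · right; intro s hs e2
          by_cases e3 : s = v
          · subst e3; exact e e2.symm
          · exact h s ⟨e3, hs⟩ e2
    have hIm : (Finset.univ \ (S.erase v).image l).image (Function.update f (l v) u) = insert u ((Finset.univ \ S.image l).image f) := by
      rw [← hDe]; exact image_update hlv
    have hfA : ∀ s ∈ A, Function.update f (l v) u s = f s := fun s hs => upd hlv (hAD s hs)
    have hWA : ∀ s ∈ A, s ≠ v → ∀ a, s(f s, a) ∈ insert s(f v, u') W → s(f s, a) ∈ W := by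
      intro s hs hsv a h
      rcases Finset.mem_insert.1 h with h | h
      · exfalso
        rcases Sym2.eq_iff.1 h with ⟨h3, _⟩ | ⟨h3, _⟩
        · exact hsv (hSt.inj _ (hAD s hs) _ (hAD v hvA) h3)
        · exact hu' (h3 ▸ Finset.mem_image_of_mem f (hAD s hs))
      · exact h
    have hvQ : ∀ q ∈ Q, q ≠ v := by
      rintro q hq rfl; exact Finset.disjoint_left.1 hSQ hv hq
    have hin : ∀ s ∈ S.erase v ∪ Q, s ∈ A ∧ s ≠ v ∧ s ∈ S ∪ Q := by
      intro s hs
      rcases Finset.mem_union.1 hs with h | h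
      · rw [Finset.mem_erase] at h
        exact ⟨hSA h.2, h.1, by simp [h.2]⟩
      · exact ⟨hQA h, hvQ s h, by simp [h]⟩
    rw [hDe] at hS'
    refine ih (S.erase v) _ _ _ _ ?_ hrpos ((Finset.erase_subset _ _).trans hSA) ?_ hS' ?_ ?_ ?_
    · rw [Finset.card_erase_of_mem hv]; omega
    · exact Finset.disjoint_of_subset_left (Finset.erase_subset _ _) hSQ
    · intro w hw s hs s' hs' h3 h4
      rw [hIm, Finset.mem_insert, not_or] at hw
      obtain ⟨b1, b2, b3⟩ := hin s hs
      obtain ⟨c1, c2, c3⟩ := hin s' hs'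
      rw [hfA s b1] at h3
      rw [hfA s' c1] at h4
      exact ha w hw.2 s b3 s' c3 (hWA s b1 b2 _ h3) (hWA s' c1 c2 _ h4)
    · intro s hs q hq h
      rw [Finset.mem_erase] at hs
      rw [hfA s (hSA hs.2), upd hlv (hlQ q hq)] at h
      exact hb s hs.2 q hq (hWA s (hSA hs.2) hs.1 _ h)
    · refine hcond u h1 _ (Finset.card_le_card ?_)
      intro w hw
      rw [hIm] at hw
      simp only [Finset.mem_filter, Finset.mem_sdiff, Finset.mem_univ, true_and, Finset.mem_insert, not_or, Finset.mem_erase] at hw ⊢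
      obtain ⟨⟨hw1, hw2⟩, s, ⟨hs1, hs2⟩, hs3⟩ := hw
      rw [hfA s (hSA hs2)] at hs3
      have h5 := hWA s (hSA hs2) hs1 _ (by simpa using hs3)
      refine ⟨hw1, ⟨hw2, s, hs2, h5⟩, ?_⟩
      rintro ⟨-, h6⟩
      exact hs1 (ha w hw2 s (by simp [hs2]) v (by simp [hv]) h5 h6)

lemma cross {n : ℕ} {T : SimpleGraph (Fin n)} (hT : T.IsTree) {D : Finset (Fin n)} {a b : Fin n}
    (ha : a ∈ D) (hb : b ∉ D) : ∃ x ∈ D, ∃ y, y ∉ D ∧ T.Adj x y := by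
  obtain ⟨p⟩ := hT.connected.preconnected a b
  obtain ⟨d, -, h1, h2⟩ := p.exists_boundary_dart (D : Set (Fin n)) (by simpa using ha) (by simpa using hb)
  exact ⟨d.fst, by simpa using h1, d.snd, by simpa using h2, d.adj⟩

inductive Br {n : ℕ} (T : SimpleGraph (Fin n)) (X : Finset (Fin n)) : Fin n → Finset (Fin n) → Prop
  | single (v : Fin n) : Br T X v {v}
  | ext (v w : Fin n) (C : Finset (Fin n)) (h : Br T X w C) (hvw : T.Adj v w) (hv : v ∉ C)
      (hn : ∀ z ∈ X, T.Adj w z → z = v ∨ z ∈ C) : Br T X v (insert v C)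
  | merge (v : Fin n) (C1 C2 : Finset (Fin n)) (h1 : Br T X v C1) (h2 : Br T X v C2)
      (hd : ∀ x ∈ C1, x ∈ C2 → x = v) : Br T X v (C1 ∪ C2)

lemma Br.mem {n : ℕ} {T : SimpleGraph (Fin n)} {X : Finset (Fin n)} {v : Fin n} {C : Finset (Fin n)}
    (h : Br T X v C) : v ∈ C := by
  induction h with
  | single v => simp
  | ext v w C h hvw hv hn ih => simp
  | merge v C1 C2 h1 h2 hd ih1 ih2 => simp [ih1]

lemma Br.leaf {n : ℕ} {T : SimpleGraph (Fin n)} {X : Finset (Fin n)} {x y : Fin n}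
    {C : Finset (Fin n)} (h : Br T (insert y X) x C) (hy : y ∉ C)
    (hxy : T.Adj x y) (hyn : ∀ z ∈ X, T.Adj y z → z = x) : Br T (insert y X) x (insert y C) := by
  have h1 : Br T (insert y X) x (insert x {y}) := by
    refine Br.ext x y {y} (Br.single y) hxy ?_ ?_
    · simp only [Finset.mem_singleton]; exact hxy.ne
    · intro z hz hyz
      rcases Finset.mem_insert.1 hz with rfl | hz
      · right; simp
      · left; exact hyn z hz hyz
  have h2 := Br.merge x C _ h h1 (by
    intro a ha hb
    simp only [Finset.mem_insert, Finset.mem_singleton] at hb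
    rcases hb with rfl | rfl
    · rfl
    · exact absurd ha hy)
  have : C ∪ insert x {y} = insert y C := by
    ext a
    have := h.mem
    simp only [Finset.mem_union, Finset.mem_insert, Finset.mem_singleton]
    constructor
    · rintro (h | rfl | rfl) <;> tauto
    · tauto
  rwa [this] at h2

lemma Br.add {n : ℕ} {T : SimpleGraph (Fin n)} {X : Finset (Fin n)} {x y v : Fin n}
    {C : Finset (Fin n)} (h : Br T X v C) (hC : C ⊆ X) (hy : y ∉ X)
    (hxy : T.Adj x y) (hyn : ∀ z ∈ X, T.Adj y z → z = x) :
    ((x = v ∨ x ∉ C) → Br T (insert y X) v C) ∧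
    (x ∈ C → x ≠ v → Br T (insert y X) v (insert y C)) := by
  induction h with
  | single v =>
    refine ⟨fun _ => Br.single v, fun h1 h2 => ?_⟩
    simp at h1; exact absurd h1 h2
  | ext v w C h hvw hv hn ih =>
    have hC' : C ⊆ X := (Finset.subset_insert _ _).trans hC
    obtain ⟨i1, i2⟩ := ih hC'
    have hwX : w ∈ X := hC' h.mem
    constructor
    · intro hx
      have hxC : x ∉ C := by
        rcases hx with rfl | hx
        · exact hv
        · exact fun h => hx (by simp [h])
      refine Br.ext v w C (i1 (Or.inr hxC)) hvw hv ?_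
      intro z hz hwz
      rcases Finset.mem_insert.1 hz with rfl | hz
      · exfalso
        have := hyn w hwX hwz.symm
        exact hxC (this ▸ h.mem)
      · exact hn z hz hwz
    · intro hx hxv
      have hxC : x ∈ C := by
        rcases Finset.mem_insert.1 hx with h | h
        · exact absurd h hxv
        · exact h
      have hyC : y ∉ C := fun h => hy (hC' h)
      have hb : Br T (insert y X) w (insert y C) := by
        by_cases e : x = w
        · subst e
          exact (i1 (Or.inl rfl)).leaf hyC hxy hyn
        · exact i2 hxC e
      rw [Finset.insert_comm]
      refine Br.ext v w _ hb hvw ?_ ?_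
      · simp only [Finset.mem_insert, not_or]
        refine ⟨?_, hv⟩
        rintro rfl
        exact hy (hC (by simp))
      · intro z hz hwz
        rcases Finset.mem_insert.1 hz with rfl | hz
        · right; simp
        · rcases hn z hz hwz with h | h
          · left; exact h
          · right; simp [h]
  | merge v C1 C2 h1 h2 hd ih1 ih2 =>
    obtain ⟨a1, a2⟩ := ih1 (Finset.subset_union_left.trans hC)
    obtain ⟨b1, b2⟩ := ih2 (Finset.subset_union_right.trans hC)
    have hy1 : y ∉ C1 := fun h => hy (hC (by simp [h]))
    have hy2 : y ∉ C2 := fun h => hy (hC (by simp [h]))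
    constructor
    · intro hx
      refine Br.merge v C1 C2 (a1 ?_) (b1 ?_) hd
      · rcases hx with h | h
        · left; exact h
        · right; exact fun h' => h (by simp [h'])
      · rcases hx with h | h
        · left; exact h
        · right; exact fun h' => h (by simp [h'])
    · intro hx hxv
      by_cases hx1 : x ∈ C1
      · have hx2 : x ∉ C2 := fun h => hxv (hd x hx1 h)
        rw [← Finset.insert_union]
        refine Br.merge v _ _ (a2 hx1 hxv) (b1 (Or.inr hx2)) ?_
        intro z hz hz2
        rcases Finset.mem_insert.1 hz with rfl | hz
        · exact absurd hz2 hy2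
        · exact hd z hz hz2
      · have hx2 : x ∈ C2 := by
          rcases Finset.mem_union.1 hx with h | h
          · exact absurd h hx1
          · exact h
        rw [← Finset.union_insert]
        refine Br.merge v _ _ (a1 (Or.inr hx1)) (b2 hx2 hxv) ?_
        intro z hz1 hz
        rcases Finset.mem_insert.1 hz with rfl | hz
        · exact absurd hz1 hy1
        · exact hd z hz1 hz

def HX {n : ℕ} (T : SimpleGraph (Fin n)) (X : Finset (Fin n)) : SimpleGraph (Fin n) where
  Adj a b := T.Adj a b ∧ a ∈ X ∧ b ∈ X
  symm := ⟨fun a b h => ⟨h.1.symm, h.2.2, h.2.1⟩⟩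
  loopless := ⟨fun a h => h.1.ne rfl⟩

lemma Br_exists {n : ℕ} {T : SimpleGraph (Fin n)} (hT : T.IsTree) (r : Fin n) : ∀ j, j + 1 ≤ n →
    ∃ X : Finset (Fin n), X.card = j + 1 ∧ Br T X r X ∧ ∀ a ∈ X, (HX T X).Reachable r a := by
  intro j
  induction j with
  | zero =>
    intro _
    refine ⟨{r}, by simp, Br.single r, ?_⟩
    intro a ha
    rw [Finset.mem_singleton] at ha
    subst ha
    exact SimpleGraph.Reachable.refl _
  | succ j ih =>
    intro hj
    obtain ⟨X, hX, hB, hR⟩ := ih (by omega)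
    obtain ⟨b, hb⟩ : ∃ b, b ∉ X := by
      by_contra hcon
      push Not at hcon
      have : X = Finset.univ := Finset.eq_univ_iff_forall.2 hcon
      rw [this] at hX
      simp at hX
      omega
    obtain ⟨x, hx, y, hy, hxy⟩ := cross hT hB.mem hb
    have hyn : ∀ z ∈ X, T.Adj y z → z = x := by
      intro z hz hyz
      by_contra hne
      have hbr := (SimpleGraph.isAcyclic_iff_forall_edge_isBridge.1 hT.isAcyclic)
        (e := s(x,y)) hxy
      rw [SimpleGraph.isBridge_iff] at hbr
      apply hbr
      have h1 : (HX T X).Reachable x z := (hR x hx).symm.trans (hR z hz)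
      have hle : HX T X ≤ T.deleteEdges {s(x,y)} := by
        intro a b hab
        rw [SimpleGraph.deleteEdges_adj]
        refine ⟨hab.1, ?_⟩
        intro h
        rw [Set.mem_singleton_iff] at h
        rcases Sym2.eq_iff.1 h with ⟨rfl, rfl⟩ | ⟨rfl, rfl⟩
        · exact hy hab.2.2
        · exact hy hab.2.1
      refine (h1.mono hle).trans (SimpleGraph.Adj.reachable ?_)
      rw [SimpleGraph.deleteEdges_adj]
      refine ⟨hyz.symm, ?_⟩
      intro h
      rw [Set.mem_singleton_iff] at h
      rcases Sym2.eq_iff.1 h with ⟨h1, h2⟩ | ⟨h1, h2⟩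
      · exact hne h1
      · exact hy (h1 ▸ hz)
    have hle : HX T X ≤ HX T (insert y X) := by
      intro a b hab
      exact ⟨hab.1, by simp [hab.2.1], by simp [hab.2.2]⟩
    refine ⟨insert y X, by rw [Finset.card_insert_of_notMem hy, hX], ?_, ?_⟩
    · obtain ⟨b1, b2⟩ := hB.add (Finset.Subset.refl _) hy hxy hyn
      by_cases e : x = r
      · subst e
        exact (b1 (Or.inl rfl)).leaf hy hxy hyn
      · exact b2 hx e
    · intro a ha
      rcases Finset.mem_insert.1 ha with rfl | ha
      · refine ((hR x hx).mono hle).trans (SimpleGraph.Adj.reachable ?_)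
        exact ⟨hxy, by simp [hx], by simp⟩
      · exact (hR a ha).mono hle

lemma Br_univ {n : ℕ} {T : SimpleGraph (Fin n)} (hT : T.IsTree) (r : Fin n) :
    Br T Finset.univ r Finset.univ := by
  obtain ⟨X, hX, hB, -⟩ := Br_exists hT r (n-1) (by have := r.2; omega)
  have : X = Finset.univ := Finset.eq_of_subset_of_card_le (Finset.subset_univ _) (by
    rw [Finset.card_univ, Fintype.card_fin]; have := r.2; omega)
  rwa [this] at hB

lemma Br.nbr {n : ℕ} {T : SimpleGraph (Fin n)} {v : Fin n} {C : Finset (Fin n)}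
    (h : Br T Finset.univ v C) : ∀ x ∈ C, x ≠ v → ∀ z, T.Adj x z → z ∈ C := by
  induction h with
  | single v => intro x hx hne; simp at hx; exact absurd hx hne
  | ext v w C h hvw hv hn ih =>
    intro x hx hne z hxz
    rcases Finset.mem_insert.1 hx with h1 | hx
    · exact absurd h1 hne
    · by_cases e : x = w
      · subst e
        rcases hn z (by simp) hxz with h | h <;> simp [h]
      · simp [ih x hx e z hxz]
  | merge v C1 C2 h1 h2 hd ih1 ih2 =>
    intro x hx hne z hxz
    rcases Finset.mem_union.1 hx with hx | hx
    · simp [ih1 x hx hne z hxz]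
    · simp [ih2 x hx hne z hxz]

lemma Br.grow {n : ℕ} {T : SimpleGraph (Fin n)} (hT : T.IsTree) {v : Fin n} {C D : Finset (Fin n)}
    (h : Br T Finset.univ v C) (hv : v ∈ D) (hD : ¬ C ⊆ D) :
    ∃ x ∈ D, x ∈ C ∧ ∃ y ∈ C, y ∉ D ∧ T.Adj x y := by
  obtain ⟨a, ha, ha'⟩ := Finset.not_subset.1 hD
  obtain ⟨y, hy, x, hx, hxy⟩ := cross hT (D := C \ D) (a := a) (b := v) (by simp [ha, ha']) (by simp [hv])
  rw [Finset.mem_sdiff] at hy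
  have hxC := h.nbr y hy.1 (by rintro rfl; exact hy.2 hv) x hxy
  refine ⟨x, ?_, hxC, y, hy.1, hy.2, hxy.symm⟩
  by_contra h2
  exact hx (Finset.mem_sdiff.2 ⟨hxC, h2⟩)

lemma Br.sub {n : ℕ} {T : SimpleGraph (Fin n)} {v : Fin n} {C : Finset (Fin n)} {N : ℕ}
    (h : Br T Finset.univ v C) (hN : 1 ≤ N) (hC : N ≤ C.card) :
    ∃ v' C', Br T Finset.univ v' C' ∧ N ≤ C'.card ∧ C'.card ≤ 2 * N := by
  induction h with
  | single v =>
    refine ⟨v, {v}, Br.single v, hC, ?_⟩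
    simp; omega
  | ext v w C h hvw hv hn ih =>
    by_cases h1 : N ≤ C.card
    · exact ih h1
    · refine ⟨v, _, Br.ext v w C h hvw hv hn, hC, ?_⟩
      have := Finset.card_insert_le v C
      omega
  | merge v C1 C2 h1 h2 hd ih1 ih2 =>
    by_cases a1 : N ≤ C1.card
    · exact ih1 a1
    by_cases a2 : N ≤ C2.card
    · exact ih2 a2
    refine ⟨v, _, Br.merge v C1 C2 h1 h2 hd, hC, ?_⟩
    have := Finset.card_union_le C1 C2
    omega

def BP {n : ℕ} (T : SimpleGraph (Fin n)) (z : ℕ → Fin n) (t : ℕ) : Prop :=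
  (∀ i < t, T.Adj (z i) (z (i+1))) ∧
  (∀ i, 0 < i → i < t → ∀ x, T.Adj (z i) x → x = z (i-1) ∨ x = z (i+1)) ∧
  (∀ i j, i ≤ t → j ≤ t → z i = z j → i = j)

noncomputable def Mset {n : ℕ} (T : SimpleGraph (Fin n)) (v : Fin n) (C : Finset (Fin n)) : Finset (Fin n) :=
  C.filter (fun x => x ≠ v ∧ ∃ l ∈ C, l ≠ v ∧ T.Adj x l ∧ ∀ z, T.Adj l z → z = x)

noncomputable def Gset {n : ℕ} (T : SimpleGraph (Fin n)) (v : Fin n) (C : Finset (Fin n)) : Finset (Fin n) :=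
  C.filter (fun l => T.Adj v l ∧ ∀ z, T.Adj l z → z = v)

noncomputable def Jset {n : ℕ} (T : SimpleGraph (Fin n)) (v : Fin n) (C : Finset (Fin n)) : Finset (Fin n) :=
  C.filter (fun l => T.Adj v l ∧ ¬ ∀ z, T.Adj l z → z = v)

lemma BP.lt {n : ℕ} {T : SimpleGraph (Fin n)} {z : ℕ → Fin n} {t L : ℕ} (h : BP T z t)
    (hno : ∀ z, ¬ BP T z L) : t < L := by
  by_contra hc
  push Not at hc
  exact hno z ⟨fun i hi => h.1 i (by omega), fun i h0 hi => h.2.1 i h0 (by omega),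
    fun i j hi hj => h.2.2 i j (by omega) (by omega)⟩

lemma size_lemma {n : ℕ} {T : SimpleGraph (Fin n)} {Δ L : ℕ}
    (hΔ : ∀ x, (Finset.univ.filter (fun z => T.Adj x z)).card ≤ Δ)
    (hno : ∀ z, ¬ BP T z L) {v : Fin n} {C : Finset (Fin n)} (h : Br T Finset.univ v C) :
    C.card + (L+1) * (Jset T v C).card ≤ (Δ+1+(L+1)+L) * (Mset T v C).card + (Gset T v C).card + 1 ∧
    ((Jset T v C).card = 1 → (Gset T v C).card = 0 → ∃ z t, BP T z t ∧ z 0 = v ∧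
      (∀ i, 0 < i → i ≤ t → z i ∈ C) ∧
      C.card + (L+1) + L ≤ (Δ+1+(L+1)+L) * (Mset T v C).card + t + 1) := by
  induction h with
  | single v =>
    have : (Jset T v {v}).card = 0 := by
      rw [Finset.card_eq_zero, Jset, Finset.filter_eq_empty_iff]
      intro x hx; rw [Finset.mem_singleton] at hx; subst hx; simp
    rw [this]
    refine ⟨by simp, by simp⟩
  | ext v w C h hvw hv hn ih =>
    obtain ⟨i1, i2⟩ := ih
    have hwC := h.mem
    have hcard : (insert v C).card = C.card + 1 := Finset.card_insert_of_notMem hv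
    have hMsub : Mset T w C ⊆ Mset T v (insert v C) := by
      intro x hx
      simp only [Mset, Finset.mem_filter] at hx ⊢
      obtain ⟨hx1, hx2, l, hl, hl2, hl3, hl4⟩ := hx
      exact ⟨by simp [hx1], fun e => hv (e ▸ hx1), l, by simp [hl], fun e => hv (e ▸ hl), hl3, hl4⟩
    have hMle := Finset.card_le_card hMsub
    have honly : ∀ z ∈ insert v C, T.Adj v z → z = w := by
      intro z hz hvz
      rcases Finset.mem_insert.1 hz with rfl | hz
      · exact absurd rfl hvz.ne
      · by_contra e
        exact hv (h.nbr z hz e v hvz.symm)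
    by_cases hleaf : ∀ z, T.Adj w z → z = v
    · have hJ : (Jset T v (insert v C)).card = 0 := by
        rw [Finset.card_eq_zero, Jset, Finset.filter_eq_empty_iff]
        rintro x hx ⟨h1, h2⟩
        have := honly x hx h1
        subst this
        exact h2 hleaf
      have hG : 1 ≤ (Gset T v (insert v C)).card := by
        refine Finset.card_pos.2 ⟨w, ?_⟩
        rw [Gset, Finset.mem_filter]
        exact ⟨by simp [hwC], hvw, hleaf⟩
      have hG' : (Gset T w C).card = 0 := by
        rw [Finset.card_eq_zero, Gset, Finset.filter_eq_empty_iff]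
        rintro x hx ⟨h1, h2⟩
        exact hv (hleaf x h1 ▸ hx)
      refine ⟨?_, fun h => by omega⟩
      rw [hJ, hcard]
      have := Nat.mul_le_mul_left (Δ+1+(L+1)+L) hMle
      rw [hG'] at i1
      have h0 : 0 ≤ (L+1) * (Jset T w C).card := Nat.zero_le _
      omega
    · have hJ : (Jset T v (insert v C)).card ≤ 1 := by
        rw [Finset.card_le_one]
        intro a ha b hb
        rw [Jset, Finset.mem_filter] at ha hb
        rw [honly a ha.1 ha.2.1, honly b hb.1 hb.2.1]
      suffices H : ∃ z t, BP T z t ∧ z 0 = v ∧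
          (∀ i, 0 < i → i ≤ t → z i ∈ insert v C) ∧
          (insert v C).card + (L+1) + L ≤ (Δ+1+(L+1)+L) * (Mset T v (insert v C)).card + t + 1 by
        refine ⟨?_, fun _ _ => H⟩
        obtain ⟨z, t, h1, -, -, h2⟩ := H
        have := h1.lt hno
        have h3 := Nat.mul_le_mul_left (L+1) hJ
        omega
      have trivial_path : BP T (fun _ => v) 0 := by
        refine ⟨fun i hi => absurd hi (by omega), fun i _ hi => absurd hi (by omega), ?_⟩
        intro i j hi hj _; omega
      rcases Nat.eq_zero_or_pos (Gset T w C).card with hg | hg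
      · rcases Nat.lt_or_ge (Jset T w C).card 2 with hj | hj
        · have hGe := Finset.card_eq_zero.1 hg
          have hnbr : ∀ z ∈ C, T.Adj w z → z ∈ Jset T w C := by
            intro z hz hwz
            rw [Jset, Finset.mem_filter]
            refine ⟨hz, hwz, fun hh => ?_⟩
            have : z ∈ Gset T w C := by rw [Gset, Finset.mem_filter]; exact ⟨hz, hwz, hh⟩
            rw [hGe] at this; simp at this
          have hj1 : (Jset T w C).card = 1 := by
            rcases Nat.eq_zero_or_pos (Jset T w C).card with h0 | h0
            · exfalso
              apply hleaf
              intro z hz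
              rcases hn z (by simp) hz with h1 | h1
              · exact h1
              · have := hnbr z h1 hz
                rw [Finset.card_eq_zero.1 h0] at this; simp at this
            · omega
          obtain ⟨z, t, hz, hz0, hzC, hzc⟩ := i2 hj1 hg
          refine ⟨fun i => if i = 0 then v else z (i-1), t+1, ⟨?_, ?_, ?_⟩, by simp, ?_, ?_⟩
          · intro i hi
            rcases Nat.eq_zero_or_pos i with rfl | hi0
            · simpa [hz0] using hvw
            · obtain ⟨k, rfl⟩ : ∃ k, i = k + 1 := ⟨i-1, by omega⟩
              simpa using hz.1 k (by omega)
          · intro i hi0 hi x hx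
            obtain ⟨k, rfl⟩ : ∃ k, i = k + 1 := ⟨i-1, by omega⟩
            simp only [Nat.add_sub_cancel, Nat.add_eq_zero_iff, one_ne_zero, and_false, if_false] at hx ⊢
            rcases Nat.eq_zero_or_pos k with rfl | hk
            · rw [hz0] at hx
              rcases hn x (by simp) hx with h1 | h1
              · left; simpa using h1
              · right
                have e1 := hnbr x h1 hx
                have e2 := hnbr (z 1) (hzC 1 (by omega) (by omega)) (by
                  have := hz.1 0 (by omega); rwa [hz0] at this)
                simpa using Finset.card_le_one.1 hj1.le x e1 (z 1) e2
            · rcases hz.2.1 k hk (by omega) x hx with h1 | h1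
              · left; rw [if_neg (by omega)]; exact h1
              · right; exact h1
          · have hzC' : ∀ i, i ≤ t → z i ∈ C := by
              intro i hi
              rcases Nat.eq_zero_or_pos i with rfl | hi0
              · rw [hz0]; exact hwC
              · exact hzC i hi0 hi
            intro i j hi hj e
            rcases Nat.eq_zero_or_pos i with rfl | hi0 <;> rcases Nat.eq_zero_or_pos j with rfl | hj0
            · rfl
            · simp only [if_true, if_neg hj0.ne'] at e
              exact absurd (e ▸ hzC' (j-1) (by omega)) hv
            · simp only [if_true, if_neg hi0.ne'] at e
              exact absurd (e ▸ hzC' (i-1) (by omega)) hv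
            · simp only [if_neg hi0.ne', if_neg hj0.ne'] at e
              have := hz.2.2 (i-1) (j-1) (by omega) (by omega) e
              omega
          · intro i hi0 hi
            simp only [if_neg hi0.ne']
            rcases Nat.eq_zero_or_pos (i-1) with h0 | h0
            · rw [h0, hz0]; simp [hwC]
            · simp [hzC (i-1) h0 (by omega)]
          · have := Nat.mul_le_mul_left (Δ+1+(L+1)+L) hMle
            omega
        · refine ⟨fun _ => v, 0, trivial_path, rfl, fun i h1 h2 => by omega, ?_⟩
          have := Nat.mul_le_mul_left (Δ+1+(L+1)+L) hMle
          have h3 := Nat.mul_le_mul_left (L+1) hj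
          omega
      · refine ⟨fun _ => v, 0, trivial_path, rfl, fun i h1 h2 => by omega, ?_⟩
        have hm : (Mset T w C).card + 1 ≤ (Mset T v (insert v C)).card := by
          have hw1 : w ∉ Mset T w C := by simp [Mset]
          rw [← Finset.card_insert_of_notMem hw1]
          refine Finset.card_le_card (Finset.insert_subset ?_ hMsub)
          obtain ⟨l, hl⟩ := Finset.card_pos.1 hg
          rw [Gset, Finset.mem_filter] at hl
          rw [Mset, Finset.mem_filter]
          exact ⟨by simp [hwC], hvw.ne', l, by simp [hl.1], fun e => hv (e ▸ hl.1), hl.2.1, hl.2.2⟩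
        have hgΔ : (Gset T w C).card ≤ Δ := by
          refine le_trans (Finset.card_le_card ?_) (hΔ w)
          intro a ha
          rw [Gset, Finset.mem_filter] at ha
          simp [ha.2.1]
        have := Nat.mul_le_mul_left (Δ+1+(L+1)+L) hm
        rw [Nat.mul_add, Nat.mul_one] at this
        have h0 : 0 ≤ (L+1) * (Jset T w C).card := Nat.zero_le _
        omega
  | merge v C1 C2 h1 h2 hd ih1 ih2 =>
    obtain ⟨a1, a2⟩ := ih1
    obtain ⟨b1, b2⟩ := ih2
    have hC : (C1 ∪ C2).card + 1 = C1.card + C2.card := by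
      have := Finset.card_union_add_card_inter C1 C2
      have h3 : C1 ∩ C2 = {v} := by
        ext a
        rw [Finset.mem_inter, Finset.mem_singleton]
        constructor
        · rintro ⟨x1, x2⟩; exact hd a x1 x2
        · rintro rfl; exact ⟨h1.mem, h2.mem⟩
      rw [h3, Finset.card_singleton] at this
      omega
    have hM : (Mset T v C1).card + (Mset T v C2).card ≤ (Mset T v (C1 ∪ C2)).card := by
      rw [← Finset.card_union_of_disjoint]
      · refine Finset.card_le_card (Finset.union_subset ?_ ?_)
        · intro x hx
          simp only [Mset, Finset.mem_filter] at hx ⊢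
          obtain ⟨x1, x2, l, l1, l2⟩ := hx
          exact ⟨by simp [x1], x2, l, by simp [l1], l2⟩
        · intro x hx
          simp only [Mset, Finset.mem_filter] at hx ⊢
          obtain ⟨x1, x2, l, l1, l2⟩ := hx
          exact ⟨by simp [x1], x2, l, by simp [l1], l2⟩
      · rw [Finset.disjoint_left]
        intro x hx hx'
        simp only [Mset, Finset.mem_filter] at hx hx'
        exact hx.2.1 (hd x hx.1 hx'.1)
    have hG : (Gset T v C1).card + (Gset T v C2).card = (Gset T v (C1 ∪ C2)).card := by
      rw [← Finset.card_union_of_disjoint]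
      · congr 1
        simp only [Gset]
        exact (Finset.filter_union _ _ _).symm
      · rw [Finset.disjoint_left]
        intro x hx hx'
        simp only [Gset, Finset.mem_filter] at hx hx'
        exact hx.2.1.ne' (hd x hx.1 hx'.1)
    have hJ : (Jset T v C1).card + (Jset T v C2).card = (Jset T v (C1 ∪ C2)).card := by
      rw [← Finset.card_union_of_disjoint]
      · congr 1
        simp only [Jset]
        exact (Finset.filter_union _ _ _).symm
      · rw [Finset.disjoint_left]
        intro x hx hx'
        simp only [Jset, Finset.mem_filter] at hx hx'
        exact hx.2.1.ne' (hd x hx.1 hx'.1)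
    have hM' := Nat.mul_le_mul_left (Δ+1+(L+1)+L) hM
    rw [Nat.mul_add] at hM'
    constructor
    · rw [← hJ, Nat.mul_add]
      omega
    · intro j1 g0
      have g1 : (Gset T v C1).card = 0 := by omega
      have g2 : (Gset T v C2).card = 0 := by omega
      rcases Nat.eq_zero_or_pos (Jset T v C1).card with hj | hj
      · obtain ⟨z, t, c1, c2, c3, c4⟩ := b2 (by omega) g2
        refine ⟨z, t, c1, c2, fun i x y => by simp [c3 i x y], ?_⟩
        rw [hj] at a1
        omega
      · obtain ⟨z, t, c1, c2, c3, c4⟩ := a2 (by omega) g1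
        refine ⟨z, t, c1, c2, fun i x y => by simp [c3 i x y], ?_⟩
        have : (Jset T v C2).card = 0 := by omega
        rw [this] at b1
        omega

lemma dichotomy {n : ℕ} {T : SimpleGraph (Fin n)} {Δ L : ℕ} (hT : T.IsTree)
    (hΔ : ∀ x, (Finset.univ.filter (fun z => T.Adj x z)).card ≤ Δ) (k : ℕ)
    (hn : (Δ+1+(L+1)+L) * k + Δ + 2 ≤ n) :
    (∃ z, BP T z L) ∨ ∃ v C, Br T Finset.univ v C ∧ k < (Mset T v C).card ∧
      C.card ≤ 2 * ((Δ+1+(L+1)+L) * k + Δ + 2) := by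
  by_cases hno : ∃ z, BP T z L
  · left; exact hno
  right
  push Not at hno
  obtain ⟨v, C, hB, h1, h2⟩ := (Br_univ hT (⟨0, by omega⟩ : Fin n)).sub
    (N := (Δ+1+(L+1)+L) * k + Δ + 2) (by omega) (by simpa using hn)
  refine ⟨v, C, hB, ?_, h2⟩
  have h3 := (size_lemma hΔ hno hB).1
  have hgΔ : (Gset T v C).card ≤ Δ := by
    refine le_trans (Finset.card_le_card ?_) (hΔ v)
    intro a ha
    rw [Gset, Finset.mem_filter] at ha
    simp [ha.2.1]
  by_contra hc
  push Not at hc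
  have := Nat.mul_le_mul_left (Δ+1+(L+1)+L) hc
  have h0 : 0 ≤ (L+1) * (Jset T v C).card := Nat.zero_le _
  omega

lemma WW_eq {n t t' : ℕ} {T : SimpleGraph (Fin n)} {Cl W : Finset (Sym2 (Fin n))} (h : t = t')
    (H : WW T t' Cl W) : WW T t Cl W := h ▸ H

lemma caseA {n : ℕ} {T : SimpleGraph (Fin n)} {Δ : ℕ} (hT : T.IsTree)
    (hΔ : ∀ x, (Finset.univ.filter (fun z => T.Adj x z)).card ≤ Δ) {v : Fin n} {C : Finset (Fin n)}
    (hB : Br T Finset.univ v C) (hM : 2 * Δ + 8 < (Mset T v C).card) (hC : 2 * C.card + 2 ≤ n) :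
    WW T n ∅ ∅ := by
  have hMp : ∀ x ∈ Mset T v C, ∃ l, l ∈ C ∧ l ≠ v ∧ T.Adj x l ∧ ∀ z, T.Adj l z → z = x := by
    intro x hx
    rw [Mset, Finset.mem_filter] at hx
    obtain ⟨_, _, l, h1, h2, h3, h4⟩ := hx
    exact ⟨l, h1, h2, h3, h4⟩
  choose! l lC lv ladj lleaf using hMp
  obtain ⟨A, hAM, hAc⟩ := Finset.exists_subset_card_eq (show 2 * Δ + 9 ≤ (Mset T v C).card by omega)
  obtain ⟨Q, hQA, hQc⟩ := Finset.exists_subset_card_eq (show 3 ≤ A.card by omega)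
  have hMC : ∀ x ∈ A, x ∈ C ∧ x ≠ v := by
    intro x hx
    have := hAM hx
    rw [Mset, Finset.mem_filter] at this
    exact ⟨this.1, this.2.1⟩
  have hAC : A.card ≤ C.card := Finset.card_le_card (fun x hx => (hMC x hx).1)
  have hA : ∀ s ∈ A, ∀ s' ∈ A, s ≠ l s' := by
    intro s hs s' hs' e
    have e1 : l s = s' := lleaf s' (hAM hs') (l s) (e ▸ ladj s (hAM hs))
    obtain ⟨b, hb⟩ : ∃ b, b ∉ ({s, s'} : Finset (Fin n)) := by
      by_contra hcon
      push Not at hcon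
      have h1 : ({s, s'} : Finset (Fin n)) = Finset.univ := Finset.eq_univ_iff_forall.2 hcon
      have h2 := Finset.card_le_two (a := s) (b := s')
      rw [h1, Finset.card_univ, Fintype.card_fin] at h2
      omega
    obtain ⟨x, hx, y, hy, hxy⟩ := cross hT (a := s) (by simp) hb
    simp only [Finset.mem_insert, Finset.mem_singleton, not_or] at hx hy
    rcases hx with rfl | rfl
    · exact hy.2 (lleaf s' (hAM hs') y (e ▸ hxy))
    · exact hy.1 (lleaf s (hAM hs) y (e1.symm ▸ hxy))
  have linj : ∀ s ∈ A, ∀ s' ∈ A, l s = l s' → s = s' := by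
    intro s hs s' hs' e
    exact lleaf s' (hAM hs') s (e ▸ (ladj s (hAM hs)).symm)
  set S := A \ Q with hS
  have hSA : S ⊆ A := Finset.sdiff_subset
  have hSc : S.card = 2 * Δ + 6 := by
    rw [hS, Finset.card_sdiff_of_subset hQA]; omega
  set L := S.image l with hL
  have hLc : L.card = 2 * Δ + 6 := by
    rw [← hSc]
    exact Finset.card_image_of_injOn (fun x hx y hy e => linj x (hSA hx) y (hSA hy) e)
  have hLm : ∀ a, a ∈ L ↔ ∃ s ∈ S, l s = a := fun a => Finset.mem_image
  have hLC : L ⊆ C := by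
    intro a ha
    obtain ⟨s, hs, rfl⟩ := (hLm a).1 ha
    exact lC s (hAM (hSA hs))
  have hX1 : v ∈ C \ L := by
    rw [Finset.mem_sdiff]
    refine ⟨hB.mem, fun h => ?_⟩
    obtain ⟨s, hs, h1⟩ := (hLm _).1 h
    exact lv s (hAM (hSA hs)) h1
  have hAX : A ⊆ C \ L := by
    intro a ha
    rw [Finset.mem_sdiff]
    refine ⟨(hMC a ha).1, fun h => ?_⟩
    obtain ⟨s, hs, h1⟩ := (hLm _).1 h
    exact hA a ha s (hSA hs) h1.symm
  have hLp : ∀ a ∈ L, ∃ s ∈ A, ∀ z, T.Adj a z → z = s := by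
    intro a ha
    obtain ⟨s, hs, rfl⟩ := (hLm _).1 ha
    exact ⟨s, hSA hs, lleaf s (hAM (hSA hs))⟩
  have hX12 : C \ L ⊆ Finset.univ \ L := Finset.sdiff_subset_sdiff (Finset.subset_univ _) (Finset.Subset.refl _)
  have c1 : (C \ L).card = C.card - (2 * Δ + 6) := by
    rw [Finset.card_sdiff_of_subset hLC, hLc]
  have c2 : (Finset.univ \ L).card = n - (2 * Δ + 6) := by
    rw [Finset.card_sdiff_of_subset (Finset.subset_univ _), hLc, Finset.card_univ, Fintype.card_fin]
  have grow1 : ∀ D ⊆ C \ L, {v} ⊆ D → D ≠ C \ L → ∃ x ∈ D, ∃ y ∈ C \ L, y ∉ D ∧ T.Adj x y := by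
    intro D hD hv hne
    obtain ⟨a, ha, haD⟩ : ∃ a ∈ C \ L, a ∉ D := by
      by_contra hcon
      push Not at hcon
      exact hne (Finset.Subset.antisymm hD hcon)
    rw [Finset.mem_sdiff] at ha
    obtain ⟨x, hx, hxC, y, hy, hyD, hxy⟩ := hB.grow hT
      (D := D ∪ L.filter (fun b => ∃ p ∈ D, T.Adj b p))
      (Finset.mem_union_left _ (by simpa using hv)) (by
      intro h
      have := h ha.1
      rcases Finset.mem_union.1 this with h | h
      · exact haD h
      · exact ha.2 (Finset.mem_filter.1 h).1)
    rw [Finset.mem_union, not_or] at hyD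
    have hxD : x ∈ D := by
      rcases Finset.mem_union.1 hx with h | h
      · exact h
      · exfalso
        obtain ⟨h1, p, hp, hxp⟩ := Finset.mem_filter.1 h
        obtain ⟨s, hs, h2⟩ := hLp x h1
        rw [h2 p hxp] at hp
        rw [← h2 y hxy] at hp
        exact hyD.1 hp
    refine ⟨x, hxD, y, ?_, hyD.1, hxy⟩
    rw [Finset.mem_sdiff]
    exact ⟨hy, fun h => hyD.2 (Finset.mem_filter.2 ⟨h, x, hxD, hxy.symm⟩)⟩
  have grow2 : ∀ D ⊆ Finset.univ \ L, C \ L ⊆ D → D ≠ Finset.univ \ L →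
      ∃ x ∈ D, ∃ y ∈ Finset.univ \ L, y ∉ D ∧ T.Adj x y := by
    intro D hD hv hne
    obtain ⟨a, ha, haD⟩ : ∃ a ∈ Finset.univ \ L, a ∉ D := by
      by_contra hcon
      push Not at hcon
      exact hne (Finset.Subset.antisymm hD hcon)
    rw [Finset.mem_sdiff] at ha
    obtain ⟨x, hx, y, hyD, hxy⟩ := cross hT (D := D ∪ L) (a := v) (b := a)
      (Finset.mem_union_left _ (hv hX1)) (by rw [Finset.mem_union]; tauto)
    rw [Finset.mem_union, not_or] at hyD
    refine ⟨x, ?_, y, by simp [hyD.2], hyD.1, hxy⟩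
    rcases Finset.mem_union.1 hx with h | h
    · exact h
    · exfalso
      obtain ⟨s, hs, h2⟩ := hLp x h
      rw [h2 y hxy] at hyD
      exact hyD.1 (hv (hAX hs))
  have hrounds : n = ((2 * Δ + 6 + 1) + ((Finset.univ \ L).card - (C \ L).card)) + ((C \ L).card - 1) := by
    have := Finset.card_pos.2 ⟨v, hX1⟩
    have := Finset.card_le_card hX12
    omega
  have hpos := Finset.card_pos.2 ⟨v, hX1⟩
  have hle12 := Finset.card_le_card hX12
  refine WW_eq hrounds ?_
  refine phase1 (T := T) (ρ := 1) (C \ L) {v} (by omega) grow1 ?_ ((C \ L).card - 1) {v} id ∅ ∅ ∅ ?_ ?_ (Finset.Subset.refl _)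
    (St.init v) (Fr.init v)
  · intro f0 Cl0 W0 R0 hSt0 hFr0
    refine phase2 (T := T) (ρ := 1) hΔ (Finset.univ \ L) (C \ L) A f0 W0 (by omega) grow2 hAX ?_ ?_ _ (C \ L) f0 Cl0 W0 R0 ?_ hX12
      (Finset.Subset.refl _) hSt0 (fun x _ => rfl) (fun s _ a h => h)
    · intro s hs y hy hsy
      rw [Finset.mem_sdiff] at hy ⊢
      exact ⟨hB.nbr s (hMC s hs).1 (hMC s hs).2 y hsy, hy.2⟩
    · intro f Cl W R hSt hf hW
      have hSQ : S ∪ Q ⊆ A := Finset.union_subset hSA hQA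
      refine finalA hT hΔ A Q l (fun s hs => ladj s (hAM hs)) (fun s hs => lleaf s (hAM hs)) hA hQA hQc
        (2 * Δ + 6) S f Cl W R hSc (by omega) hSA Finset.sdiff_disjoint hSt ?_ ?_ ?_
      · intro u hu s hs s' hs' h1 h2
        have a1 := hSQ hs
        have a2 := hSQ hs'
        rw [hf s (hAX a1)] at h1
        rw [hf s' (hAX a2)] at h2
        refine hSt0.inj _ (hAX a1) _ (hAX a2) (hFr0.f1 u _ _ ?_ (swp (hW s a1 u h1)) (swp (hW s' a2 u h2)))
        intro h
        obtain ⟨x, hx, rfl⟩ := Finset.mem_image.1 h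
        exact hu (Finset.mem_image.2 ⟨x, hX12 hx, hf x hx⟩)
      · intro s hs q hq h
        have a1 := hSA hs
        have hlq : l q ∈ C \ L := by
          rw [Finset.mem_sdiff]
          refine ⟨lC q (hAM (hQA hq)), fun h => ?_⟩
          obtain ⟨s', hs', h1⟩ := (hLm _).1 h
          have := linj _ (hSA hs') _ (hQA hq) h1
          subst this
          exact (Finset.mem_sdiff.1 hs').2 hq
        rw [hf s (hAX a1), hf _ hlq] at h
        exact hFr0.f2 s (hAX a1) _ hlq (hW s a1 _ h)
      · right; right
        have h1 : ((Finset.univ \ (Finset.univ \ S.image l).image f).filter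
          (fun u => ∃ s ∈ S, s(f s, u) ∈ W)).card ≤ 2 * Δ + 6 := by
          refine le_trans (Finset.card_filter_le _ _) ?_
          rw [Finset.card_sdiff_of_subset (Finset.subset_univ _), hSt.card_image, Finset.card_univ, Fintype.card_fin]
          rw [c2]; omega
        omega
    · omega
  · simp only [Finset.card_singleton]; omega
  · simpa using hX1

lemma BP.nbr {n : ℕ} {T : SimpleGraph (Fin n)} {y : ℕ → Fin n} {L : ℕ} (hy : BP T y L) {k k' : ℕ}
    (hk : k < L) (hk' : k' < L) (h : T.Adj (y k) (y k')) : k' = k + 1 ∨ k = k' + 1 := by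
  rcases Nat.eq_zero_or_pos k with rfl | h0
  · rcases Nat.eq_zero_or_pos k' with rfl | h1
    · exact absurd rfl h.ne
    · rcases hy.2.1 k' h1 hk' _ h.symm with e | e
      · have := hy.2.2 _ _ (by omega) (by omega) e; omega
      · have := hy.2.2 _ _ (by omega) (by omega) e; omega
  · rcases hy.2.1 k h0 hk _ h with e | e
    · have := hy.2.2 _ _ (by omega) (by omega) e; omega
    · have := hy.2.2 _ _ (by omega) (by omega) e; omega

lemma winB {n : ℕ} {T : SimpleGraph (Fin n)} {y : ℕ → Fin n} {L t : ℕ} (hy : BP T y L) (hL : 13 ≤ L)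
    {F : Fin n → Fin n} {Cl W : Finset (Sym2 (Fin n))} (hF : Function.Injective F)
    (hedge : ∀ a b, T.Adj a b → a ≠ y 11 → b ≠ y 11 → s(F a, F b) ∈ Cl)
    (σ : ℕ → ℕ) (s0 : σ 0 = 0) (s12 : σ 12 = 12) (sle : ∀ k < 13, σ k < 13)
    (sinj : ∀ k < 13, ∀ k' < 13, σ k = σ k' → k = k') (P : List (ℕ × ℕ))
    (hP : ∀ p ∈ P, s(F (y p.1), F (y p.2)) ∈ Cl)
    (hσ : ∀ k < 12, ((σ k + 1 = σ (k+1) ∨ σ k = σ (k+1) + 1) ∧ σ k ≠ 11 ∧ σ (k+1) ≠ 11) ∨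
      (σ k, σ (k+1)) ∈ P ∨ (σ (k+1), σ k) ∈ P) : WW T t Cl W := by
  have yinj : ∀ k < 13, ∀ k' < 13, y k = y k' → k = k' := fun k hk k' hk' e =>
    hy.2.2 k k' (by omega) (by omega) e
  have hpath : ∀ k < 12, s(F (y (σ k)), F (y (σ (k+1)))) ∈ Cl := by
    intro k hk
    have l1 := sle k (by omega)
    have l2 := sle (k+1) (by omega)
    rcases hσ k hk with ⟨h1, h2, h3⟩ | h | h
    · refine hedge _ _ ?_ (fun e => h2 (yinj _ l1 _ (by omega) e)) (fun e => h3 (yinj _ l2 _ (by omega) e))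
      rcases h1 with h1 | h1
      · rw [← h1]; exact hy.1 _ (by omega)
      · rw [h1]; exact (hy.1 _ (by omega)).symm
    · exact hP _ h
    · exact swp (hP _ h)
  let π : Fin n → Fin n := fun a => if h : ∃ k, k < 13 ∧ y k = a then y (σ h.choose) else a
  have π1 : ∀ k < 13, π (y k) = y (σ k) := by
    intro k hk
    have h : ∃ k', k' < 13 ∧ y k' = y k := ⟨k, hk, rfl⟩
    have h2 := h.choose_spec
    have e := yinj _ h2.1 k hk h2.2
    simp only [π, dif_pos h]
    rw [e]
  have π2 : ∀ a, (∀ k < 13, y k ≠ a) → π a = a := by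
    intro a h
    simp only [π]
    rw [dif_neg]
    rintro ⟨k, hk, e⟩
    exact h k hk e
  have cases : ∀ a, (∃ k < 13, a = y k) ∨ (∀ k < 13, y k ≠ a) := by
    intro a
    by_cases h : ∃ k < 13, a = y k
    · left; exact h
    · right; intro k hk e; exact h ⟨k, hk, e.symm⟩
  have πinj : Function.Injective π := by
    intro a b hab
    rcases cases a with ⟨k, hk, rfl⟩ | ha <;> rcases cases b with ⟨k', hk', rfl⟩ | hb
    · rw [π1 k hk, π1 k' hk'] at hab
      rw [sinj k hk k' hk' (yinj _ (sle k hk) _ (sle k' hk') hab)]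
    · rw [π1 k hk, π2 b hb] at hab
      exact absurd hab (hb _ (sle k hk))
    · rw [π1 k' hk', π2 a ha] at hab
      exact absurd hab.symm (ha _ (sle k' hk'))
    · rwa [π2 a ha, π2 b hb] at hab
  have mixed : ∀ k < 13, ∀ b, (∀ k < 13, y k ≠ b) → T.Adj (y k) b → s(F (π (y k)), F (π b)) ∈ Cl := by
    intro k hk b hb hab
    have hk2 : k = 0 ∨ k = 12 := by
      by_contra hc
      push Not at hc
      rcases hy.2.1 k (by omega) (by omega) b hab with e | e
      · exact hb _ (by omega) e.symm
      · exact hb _ (by omega) e.symm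
    have hk3 : σ k = k := by rcases hk2 with rfl | rfl <;> assumption
    rw [π1 k hk, π2 b hb, hk3]
    refine hedge _ _ hab ?_ (fun e => hb 11 (by omega) e.symm)
    intro e
    have := yinj _ hk _ (by omega) e
    omega
  refine WW_win (fun a => F (π a)) (hF.comp πinj) ?_
  intro a b hab
  rcases cases a with ⟨k, hk, rfl⟩ | ha <;> rcases cases b with ⟨k', hk', rfl⟩ | hb
  · show s(F (π (y k)), F (π (y k'))) ∈ Cl
    rw [π1 k hk, π1 k' hk']
    rcases hy.nbr (k := k) (k' := k') (by omega) (by omega) hab with rfl | rfl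
    · exact hpath k (by omega)
    · exact swp (hpath k' (by omega))
  · exact mixed k hk b hb hab
  · exact swp (mixed k' hk' a ha hab.symm)
  · show s(F (π a), F (π b)) ∈ Cl
    rw [π2 a ha, π2 b hb]
    exact hedge a b hab (fun e => ha 11 (by omega) e.symm) (fun e => hb 11 (by omega) e.symm)

lemma endB_sub {n : ℕ} {T : SimpleGraph (Fin n)} {y : ℕ → Fin n} {L : ℕ} (hy : BP T y L) (hL : 13 ≤ L)
    {F : Fin n → Fin n} {Cl W : Finset (Sym2 (Fin n))} (hF : Function.Injective F)
    (hedge : ∀ a b, T.Adj a b → a ≠ y 11 → b ≠ y 11 → s(F a, F b) ∈ Cl)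
    (hcu : ∀ a, s(a, F (y 11)) ∉ Cl) (hc0 : s(F (y 12), F (y 10)) ∉ Cl)
    (hcj : ∀ k < 9, s(F (y 10), F (y k)) ∉ Cl)
    (w1 : s(F (y 12), F (y 11)) ∉ W) (w2 : s(F (y 12), F (y 10)) ∉ W) (w3 : s(F (y 10), F (y 11)) ∉ W)
    (w4 : ∀ k < 10, s(F (y 10), F (y k)) ∉ W) (k i : ℕ) (hk : k = 2 ∨ k = 5 ∨ k = 8)
    (hi : i = 2 ∨ i = 5 ∨ i = 8) (hki : k ≠ i)
    (w5 : s(F (y (k-1)), F (y 11)) ∉ W) (w6 : s(F (y (k+1)), F (y 11)) ∉ W) :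
    WW T 2 (insert s(F (y k), F (y 11)) Cl) (insert s(F (y i), F (y 11)) W) := by
  have qinj : ∀ a < 13, ∀ b < 13, F (y a) = F (y b) → a = b := fun a ha b hb e =>
    hy.2.2 a b (by omega) (by omega) (hF e)
  have qq : ∀ a b c d, a < 13 → b < 13 → c < 13 → d < 13 → s(F (y a), F (y b)) = s(F (y c), F (y d)) →
      (a = c ∧ b = d) ∨ (a = d ∧ b = c) := by
    intro a b c d ha hb hc hd e
    rcases Sym2.eq_iff.1 e with ⟨h1, h2⟩ | ⟨h1, h2⟩
    · left; exact ⟨qinj _ ha _ hc h1, qinj _ hb _ hd h2⟩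
    · right; exact ⟨qinj _ ha _ hd h1, qinj _ hb _ hc h2⟩
  have hk' : k < 9 ∧ 2 ≤ k := by omega
  have hi' : i < 9 ∧ 2 ≤ i := by omega
  have hkd : k + 1 ≠ i ∧ k - 1 ≠ i := by omega
  refine WW_step (F (y 12)) (F (y 11)) (F (y 12)) (F (y 10)) ?_ ?_ ?_ ?_ ?_ ?_ ?_ ?_ ?_
  · intro e; have := qinj _ (by omega) _ (by omega) e; omega
  · intro e; have := qinj _ (by omega) _ (by omega) e; omega
  · intro e; have := qq _ _ _ _ (by omega) (by omega) (by omega) (by omega) e; omega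
  · rw [Finset.mem_insert, not_or]
    refine ⟨?_, hcu _⟩
    intro e; have := qq _ _ _ _ (by omega) (by omega) (by omega) (by omega) e; omega
  · rw [Finset.mem_insert, not_or]
    refine ⟨?_, w1⟩
    intro e; have := qq _ _ _ _ (by omega) (by omega) (by omega) (by omega) e; omega
  · rw [Finset.mem_insert, not_or]
    refine ⟨?_, hc0⟩
    intro e; have := qq _ _ _ _ (by omega) (by omega) (by omega) (by omega) e; omega
  · rw [Finset.mem_insert, not_or]
    refine ⟨?_, w2⟩
    intro e; have := qq _ _ _ _ (by omega) (by omega) (by omega) (by omega) e; omega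
  · -- Client took g u
    refine WW_step (F (y 10)) (F (y 11)) (F (y 10)) (F (y (k-1))) ?_ ?_ ?_ ?_ ?_ ?_ ?_ ?_ ?_
    · intro e; have := qinj _ (by omega) _ (by omega) e; omega
    · intro e; have := qinj _ (by omega) _ (by omega) e; omega
    · intro e; have := qq _ _ _ _ (by omega) (by omega) (by omega) (by omega) e; omega
    · rw [Finset.mem_insert, Finset.mem_insert, not_or, not_or]
      refine ⟨?_, ?_, hcu _⟩
      · intro e; have := qq _ _ _ _ (by omega) (by omega) (by omega) (by omega) e; omega
      · intro e; have := qq _ _ _ _ (by omega) (by omega) (by omega) (by omega) e; omega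
    · rw [Finset.mem_insert, Finset.mem_insert, not_or, not_or]
      refine ⟨?_, ?_, w3⟩
      · intro e; have := qq _ _ _ _ (by omega) (by omega) (by omega) (by omega) e; omega
      · intro e; have := qq _ _ _ _ (by omega) (by omega) (by omega) (by omega) e; omega
    · rw [Finset.mem_insert, Finset.mem_insert, not_or, not_or]
      refine ⟨?_, ?_, hcj _ (by omega)⟩
      · intro e; have := qq _ _ _ _ (by omega) (by omega) (by omega) (by omega) e; omega
      · intro e; have := qq _ _ _ _ (by omega) (by omega) (by omega) (by omega) e; omega
    · rw [Finset.mem_insert, Finset.mem_insert, not_or, not_or]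
      refine ⟨?_, ?_, w4 _ (by omega)⟩
      · intro e; have := qq _ _ _ _ (by omega) (by omega) (by omega) (by omega) e; omega
      · intro e; have := qq _ _ _ _ (by omega) (by omega) (by omega) (by omega) e; omega
    · refine winB hy hL hF (fun a b h1 h2 h3 => by simp [hedge a b h1 h2 h3]) (fun x => x) rfl rfl (by simp) (by simp)
        [(12,11),(10,11)] (by simp) (by decide)
    · refine winB hy hL hF (fun a b h1 h2 h3 => by simp [hedge a b h1 h2 h3])
        (fun x => if k ≤ x ∧ x ≤ 10 then 10 + k - x else x) ?_ ?_ ?_ ?_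
        [(12,11),(k,11),(10,k-1)] (by simp) ?_
      all_goals (rcases hk with rfl | rfl | rfl <;> decide)
  · have fin : ∀ k', (k' = k ∨ k' = k + 1) → ∀ Cl', Cl ⊆ Cl' → s(F (y 12), F (y 10)) ∈ Cl' →
        s(F (y k'), F (y 11)) ∈ Cl' → s(F (y (k'-1)), F (y 11)) ∈ Cl' → ∀ W', WW T 0 Cl' W' := by
      intro k' hk' Cl' hsub m1 m2 m3 W'
      refine winB hy hL hF (fun a b h1 h2 h3 => hsub (hedge a b h1 h2 h3))
        (fun x => if k' + 1 ≤ x ∧ x ≤ 11 then x - 1 else if x = k' then 11 else x) ?_ ?_ ?_ ?_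
        [(12,10),(k',11),(k'-1,11)] (by simp [m1, m2, m3]) ?_
      all_goals (rcases hk with rfl | rfl | rfl <;> rcases hk' with rfl | rfl <;> decide)
    refine WW_step (F (y (k-1))) (F (y 11)) (F (y (k+1))) (F (y 11)) ?_ ?_ ?_ ?_ ?_ ?_ ?_ ?_ ?_
    · intro e; have := qinj _ (by omega) _ (by omega) e; omega
    · intro e; have := qinj _ (by omega) _ (by omega) e; omega
    · intro e; have := qq _ _ _ _ (by omega) (by omega) (by omega) (by omega) e; omega
    · rw [Finset.mem_insert, Finset.mem_insert, not_or, not_or]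
      refine ⟨?_, ?_, hcu _⟩
      · intro e; have := qq _ _ _ _ (by omega) (by omega) (by omega) (by omega) e; omega
      · intro e; have := qq _ _ _ _ (by omega) (by omega) (by omega) (by omega) e; omega
    · rw [Finset.mem_insert, Finset.mem_insert, not_or, not_or]
      refine ⟨?_, ?_, w5⟩
      · intro e; have := qq _ _ _ _ (by omega) (by omega) (by omega) (by omega) e; omega
      · intro e; have := qq _ _ _ _ (by omega) (by omega) (by omega) (by omega) e; omega
    · rw [Finset.mem_insert, Finset.mem_insert, not_or, not_or]
      refine ⟨?_, ?_, hcu _⟩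
      · intro e; have := qq _ _ _ _ (by omega) (by omega) (by omega) (by omega) e; omega
      · intro e; have := qq _ _ _ _ (by omega) (by omega) (by omega) (by omega) e; omega
    · rw [Finset.mem_insert, Finset.mem_insert, not_or, not_or]
      refine ⟨?_, ?_, w6⟩
      · intro e; have := qq _ _ _ _ (by omega) (by omega) (by omega) (by omega) e; omega
      · intro e; have := qq _ _ _ _ (by omega) (by omega) (by omega) (by omega) e; omega
    · refine fin k (Or.inl rfl) _ ?_ (by simp) (by simp) (by simp) _
      intro e he; simp [he]
    · refine fin (k+1) (Or.inr rfl) _ ?_ (by simp) (by simp) (by simp) _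
      intro e he; simp [he]

lemma endB {n : ℕ} {T : SimpleGraph (Fin n)} {y : ℕ → Fin n} {L : ℕ} (hy : BP T y L) (hL : 13 ≤ L)
    {F : Fin n → Fin n} {Cl W : Finset (Sym2 (Fin n))} (hF : Function.Injective F)
    (hedge : ∀ a b, T.Adj a b → a ≠ y 11 → b ≠ y 11 → s(F a, F b) ∈ Cl)
    (hcu : ∀ a, s(a, F (y 11)) ∉ Cl) (hc0 : s(F (y 12), F (y 10)) ∉ Cl)
    (hcj : ∀ k < 9, s(F (y 10), F (y k)) ∉ Cl)
    (w1 : s(F (y 12), F (y 11)) ∉ W) (w2 : s(F (y 12), F (y 10)) ∉ W) (w3 : s(F (y 10), F (y 11)) ∉ W)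
    (w4 : ∀ k < 10, s(F (y 10), F (y k)) ∉ W)
    (w7 : ∀ k k', 1 ≤ k → k ≤ 10 → 1 ≤ k' → k' ≤ 10 → s(F (y k), F (y 11)) ∈ W →
      s(F (y k'), F (y 11)) ∈ W → k = k') : WW T 3 Cl W := by
  obtain ⟨k, i, hk, hi, hki, hfk, hfi⟩ : ∃ k i, (k = 2 ∨ k = 5 ∨ k = 8) ∧ (i = 2 ∨ i = 5 ∨ i = 8) ∧ k ≠ i ∧
      (∀ d, k ≤ d + 1 → d ≤ k + 1 → s(F (y d), F (y 11)) ∉ W) ∧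
      (∀ d, i ≤ d + 1 → d ≤ i + 1 → s(F (y d), F (y 11)) ∉ W) := by
    by_cases h : ∃ d, 1 ≤ d ∧ d ≤ 10 ∧ s(F (y d), F (y 11)) ∈ W
    · obtain ⟨d, d1, d2, hd⟩ := h
      have key : ∀ k, (k = 2 ∨ k = 5 ∨ k = 8) → (d + 1 < k ∨ k + 1 < d) →
          (∀ d, k ≤ d + 1 → d ≤ k + 1 → s(F (y d), F (y 11)) ∉ W) := by
        intro k hk hkd d' h1 h2 hd'
        have := w7 d d' d1 d2 (by omega) (by omega) hd hd'
        omega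
      by_cases c1 : d ≤ 3
      · exact ⟨5, 8, by simp, by simp, by simp, key 5 (by simp) (by omega), key 8 (by simp) (by omega)⟩
      · by_cases c2 : d ≤ 6
        · exact ⟨2, 8, by simp, by simp, by simp, key 2 (by simp) (by omega), key 8 (by simp) (by omega)⟩
        · exact ⟨2, 5, by simp, by simp, by simp, key 2 (by simp) (by omega), key 5 (by simp) (by omega)⟩
    · push Not at h
      exact ⟨2, 5, by simp, by simp, by simp, fun d h1 h2 => h d (by omega) (by omega),
        fun d h1 h2 => h d (by omega) (by omega)⟩
  have qinj : ∀ a < 13, ∀ b < 13, F (y a) = F (y b) → a = b := fun a ha b hb e =>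
    hy.2.2 a b (by omega) (by omega) (hF e)
  refine WW_step (F (y k)) (F (y 11)) (F (y i)) (F (y 11)) ?_ ?_ ?_ (hcu _) (hfk _ (by omega) (by omega))
    (hcu _) (hfi _ (by omega) (by omega)) ?_ ?_
  · intro e; have := qinj _ (by omega) _ (by omega) e; omega
  · intro e; have := qinj _ (by omega) _ (by omega) e; omega
  · intro e
    rcases Sym2.eq_iff.1 e with ⟨h1, h2⟩ | ⟨h1, h2⟩
    · exact hki (qinj _ (by omega) _ (by omega) h1)
    · have := qinj _ (by omega) _ (by omega) h1; omega
  · exact endB_sub hy hL hF hedge hcu hc0 hcj w1 w2 w3 w4 k i hk hi hki (hfk _ (by omega) (by omega)) (hfk _ (by omega) (by omega))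
  · exact endB_sub hy hL hF hedge hcu hc0 hcj w1 w2 w3 w4 i k hi hk hki.symm (hfi _ (by omega) (by omega)) (hfi _ (by omega) (by omega))

lemma St.jump {n : ℕ} {T : SimpleGraph (Fin n)} {ρ : ℕ} {D : Finset (Fin n)} {f : Fin n → Fin n}
    {Cl W R : Finset (Sym2 (Fin n))} (h : St T ρ D f Cl W R) {c u : Fin n} (hc : c ∉ D)
    (hu : u ∉ D.image f) : St T (ρ+1) (insert c D) (Function.update f c u) Cl W R := by
  have hI := image_update (f := f) (u := u) hc
  have key : ∀ a ∈ D, u ≠ f a := fun a ha e => hu (e ▸ Finset.mem_image_of_mem f ha)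
  refine ⟨?_, ?_, ?_, ?_, ?_, ?_⟩
  · intro a ha b hb hab
    rcases Finset.mem_insert.1 ha with rfl | ha1 <;> rcases Finset.mem_insert.1 hb with rfl | hb1
    · rfl
    · rw [upd hc hb1] at hab; simp at hab; exact absurd hab (key _ hb1)
    · rw [upd hc ha1] at hab; simp at hab; exact absurd hab.symm (key _ ha1)
    · rw [upd hc ha1, upd hc hb1] at hab; exact h.inj a ha1 b hb1 hab
  · rw [h.cl]
    apply Finset.image_congr
    intro e he
    induction e using Sym2.ind with
    | _ a b =>
      have h1 := (h.rT a b he).2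
      have h2 := (h.rT b a (swp he)).2
      simp only [Sym2.map_mk, upd hc h1, upd hc h2]
  · intro a b hab
    have := h.rT a b hab
    exact ⟨this.1, by simp [this.2]⟩
  · rw [Finset.card_insert_of_notMem hc]
    have := h.rc
    omega
  · intro a b hab
    rw [hI]
    rcases h.w a b hab with h1 | h1
    · left; exact Finset.mem_insert_of_mem h1
    · right; exact Finset.mem_insert_of_mem h1
  · intro x hx
    rw [hI]
    rcases Finset.mem_insert.1 hx with rfl | hx
    · rw [Finset.card_eq_zero.2]
      · exact Nat.zero_le _
      · rw [Finset.filter_eq_empty_iff]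
        rintro v - ⟨hv, hw⟩
        rw [Finset.mem_insert, not_or] at hv
        simp only [Function.update_self] at hw
        rcases h.w _ _ hw with h1 | h1
        · exact hu h1
        · exact hv.2 h1
    · rw [upd hc hx]
      refine le_trans (Finset.card_le_card ?_) ((h.wu x hx).trans (Finset.card_le_card ?_))
      · intro v hv
        simp only [Finset.mem_filter, Finset.mem_univ, true_and, Finset.mem_insert, not_or] at hv ⊢
        exact ⟨hv.1.2, hv.2⟩
      · exact Finset.filter_subset_filter _ (Finset.subset_insert _ _)

noncomputable def Gp {n : ℕ} (y : ℕ → Fin n) (m : ℕ) : Finset (Fin n) := (Finset.Icc 11 (10+m)).image y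

lemma mem_Gp {n : ℕ} {y : ℕ → Fin n} {m : ℕ} {a : Fin n} :
    a ∈ Gp y m ↔ ∃ i, 11 ≤ i ∧ i ≤ 10 + m ∧ y i = a := by
  simp [Gp, and_assoc]

def GS {n : ℕ} (T : SimpleGraph (Fin n)) (y : ℕ → Fin n) (D0 S : Finset (Fin n)) (f0 : Fin n → Fin n)
    (W0 : Finset (Sym2 (Fin n))) (m : ℕ) (f : Fin n → Fin n) (Cl W R : Finset (Sym2 (Fin n))) : Prop :=
  St T 2 (Finset.univ \ Gp y m) f Cl W R ∧ (∀ x ∈ D0, f x = f0 x) ∧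
    (∀ s ∈ S, ∀ a, s(f0 s, a) ∈ W → s(f0 s, a) ∈ W0)

lemma gapstep {n : ℕ} {T : SimpleGraph (Fin n)} {y : ℕ → Fin n} {L t : ℕ} (hy : BP T y L)
    {D0 S : Finset (Fin n)} {f0 : Fin n → Fin n} {W0 : Finset (Sym2 (Fin n))} {m : ℕ}
    {f : Fin n → Fin n} {Cl W R : Finset (Sym2 (Fin n))} (hm : m + 12 ≤ L)
    (hD0 : ∀ i, 11 ≤ i → i < L → y i ∉ D0) (hSD : S ⊆ D0) (hS : ∀ i, 11 ≤ i → i ≤ L → y i ∉ S)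
    (h : GS T y D0 S f0 W0 (m+1) f Cl W R) {u1 u2 : Fin n}
    (hu1 : u1 ∉ (Finset.univ \ Gp y (m+1)).image f) (hu2 : u2 ∉ (Finset.univ \ Gp y (m+1)).image f)
    (hne : u1 ≠ u2) (hf1 : s(f (y (m+12)), u1) ∉ W) (hf2 : s(f (y (m+12)), u2) ∉ W)
    (K : ∀ f Cl W R, GS T y D0 S f0 W0 m f Cl W R →
      (∀ u, u ∉ (Finset.univ \ Gp y m).image f → s(f (y (m+11)), u) ∉ W) → WW T t Cl W) :
    WW T (t+1) Cl W := by
  obtain ⟨hSt, hf, hW⟩ := h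
  have hx : y (m+12) ∈ Finset.univ \ Gp y (m+1) := by
    rw [Finset.mem_sdiff, mem_Gp]
    refine ⟨by simp, ?_⟩
    rintro ⟨i, h1, h2, e⟩
    have := hy.2.2 _ _ (by omega) (by omega) e
    omega
  have hyy : y (m+11) ∉ Finset.univ \ Gp y (m+1) := by
    rw [Finset.mem_sdiff, mem_Gp]
    intro h
    exact h.2 ⟨m+11, by omega, by omega, rfl⟩
  have hD0' : D0 ⊆ Finset.univ \ Gp y (m+1) := by
    intro a ha
    rw [Finset.mem_sdiff, mem_Gp]
    refine ⟨by simp, ?_⟩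
    rintro ⟨i, h1, h2, rfl⟩
    exact hD0 i h1 (by omega) ha
  refine hSt.play hx hyy (hy.1 (m+11) (by omega)).symm hu1 hu2 hne hf1 hf2 ?_
  intro u u' hu hu' huu _ _ hS'
  have hDe : insert (y (m+11)) (Finset.univ \ Gp y (m+1)) = Finset.univ \ Gp y m := by
    ext a
    simp only [Finset.mem_insert, Finset.mem_sdiff, Finset.mem_univ, true_and, mem_Gp]
    constructor
    · rintro (rfl | h)
      · rintro ⟨i, h1, h2, e⟩
        have := hy.2.2 _ _ (by omega) (by omega) e
        omega
      · rintro ⟨i, h1, h2, e⟩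
        exact h ⟨i, h1, by omega, e⟩
    · intro h
      by_cases e : a = y (m+11)
      · left; exact e
      · right
        rintro ⟨i, h1, h2, e2⟩
        by_cases e3 : i = m + 11
        · subst e3; exact e e2.symm
        · exact h ⟨i, h1, by omega, e2⟩
  have hIm := image_update (f := f) (u := u) hyy
  rw [hDe] at hS' hIm
  refine K _ _ _ _ ⟨hS', ?_, ?_⟩ ?_
  · intro x hx
    rw [upd hyy (hD0' hx), hf x hx]
  · refine prot_move hu' (hSD.trans hD0') ?_ (fun s hs => hf s (hSD hs)) hW
    intro s hs e
    have := hSt.inj _ (hD0' (hSD hs)) _ hx e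
    subst this
    exact hS _ (by omega) (by omega) hs
  · intro v hv
    rw [hIm, Finset.mem_insert, not_or] at hv
    simp only [Function.update_self]
    rw [Finset.mem_insert, not_or]
    constructor
    · intro e
      rcases Sym2.eq_iff.1 e with ⟨h1, h2⟩ | ⟨h1, h2⟩
      · exact hu (h1 ▸ Finset.mem_image_of_mem f hx)
      · exact hv.2 (h2 ▸ Finset.mem_image_of_mem f hx)
    · intro h
      rcases hSt.w _ _ h with h1 | h1
      · exact hu h1
      · exact hv.2 h1

lemma Gp_card {n : ℕ} {T : SimpleGraph (Fin n)} {y : ℕ → Fin n} {L : ℕ} (hy : BP T y L) {m : ℕ}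
    (hm : m + 10 ≤ L) : (Gp y m).card = m := by
  rw [Gp, Finset.card_image_of_injOn]
  · simp
  · intro a ha b hb e
    simp only [Finset.coe_Icc, Set.mem_Icc] at ha hb
    exact hy.2.2 _ _ (by omega) (by omega) e

lemma GS_unused {n : ℕ} {T : SimpleGraph (Fin n)} {y : ℕ → Fin n} {L : ℕ} (hy : BP T y L)
    {D0 S : Finset (Fin n)} {f0 : Fin n → Fin n} {W0 : Finset (Sym2 (Fin n))} {m : ℕ}
    {f : Fin n → Fin n} {Cl W R : Finset (Sym2 (Fin n))} (hm : m + 10 ≤ L)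
    (h : GS T y D0 S f0 W0 m f Cl W R) : (Finset.univ \ (Finset.univ \ Gp y m).image f).card = m ∧
      (Finset.univ \ Gp y m).card + m = n := by
  have h1 := Gp_card hy hm
  have h3 : (Gp y m).card ≤ n := by simpa using Finset.card_le_univ (Gp y m)
  have h2 : (Finset.univ \ Gp y m).card = n - m := by
    rw [Finset.card_sdiff_of_subset (Finset.subset_univ _), h1, Finset.card_univ, Fintype.card_fin]
  rw [Finset.card_sdiff_of_subset (Finset.subset_univ _), h.1.card_image, h2, Finset.card_univ, Fintype.card_fin]
  omega

lemma gap {n : ℕ} {T : SimpleGraph (Fin n)} {y : ℕ → Fin n} {L t : ℕ} (hy : BP T y L)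
    {D0 S : Finset (Fin n)} {f0 : Fin n → Fin n} {W0 : Finset (Sym2 (Fin n))}
    (hD0 : ∀ i, 11 ≤ i → i < L → y i ∉ D0) (hSD : S ⊆ D0) (hS : ∀ i, 11 ≤ i → i ≤ L → y i ∉ S)
    (H : ∀ f Cl W R, GS T y D0 S f0 W0 1 f Cl W R →
      (∀ u, u ∉ (Finset.univ \ Gp y 1).image f → s(f (y 12), u) ∉ W) → WW T t Cl W) :
    ∀ m f Cl W R, m + 12 ≤ L → GS T y D0 S f0 W0 (m+1) f Cl W R →
      (∀ u, u ∉ (Finset.univ \ Gp y (m+1)).image f → s(f (y (m+12)), u) ∉ W) → WW T (t+m) Cl W := by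
  intro m
  induction m with
  | zero =>
    intro f Cl W R _ h1 h2
    exact H f Cl W R h1 h2
  | succ m ih =>
    intro f Cl W R hm h1 h2
    have hc := (GS_unused hy (by omega) h1).1
    obtain ⟨a, ha, b, hb, hab⟩ := Finset.one_lt_card.1 (show 1 < _ from hc ▸ (by omega : 1 < m + 1 + 1))
    rw [Finset.mem_sdiff] at ha hb
    refine gapstep hy (t := t + m) (m := m+1) hm hD0 hSD hS h1 ha.2 hb.2 hab (h2 a ha.2) (h2 b hb.2) ?_
    intro f' Cl' W' R' g1 g2
    exact ih f' Cl' W' R' (by omega) g1 g2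

noncomputable def Pt {n : ℕ} (y : ℕ → Fin n) (m : ℕ) : Finset (Fin n) := (Finset.range m).image y

lemma mem_Pt {n : ℕ} {y : ℕ → Fin n} {m : ℕ} {a : Fin n} :
    a ∈ Pt y m ↔ ∃ i, i < m ∧ y i = a := by
  simp [Pt]

lemma Pt_card {n : ℕ} {T : SimpleGraph (Fin n)} {y : ℕ → Fin n} {L : ℕ} (hy : BP T y L) {m : ℕ}
    (hm : m ≤ L) : (Pt y m).card = m := by
  rw [Pt, Finset.card_image_of_injOn]
  · simp
  · intro a ha b hb e
    simp only [Finset.coe_range, Set.mem_Iio] at ha hb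
    exact hy.2.2 _ _ (by omega) (by omega) e

lemma Fr.congr {n : ℕ} {D : Finset (Fin n)} {f g : Fin n → Fin n} {W : Finset (Sym2 (Fin n))}
    (h : Fr D f W) (hfg : ∀ x ∈ D, g x = f x) : Fr D g W := by
  refine ⟨?_, ?_, h.f3⟩
  · intro u a b hu
    refine h.f1 u a b ?_
    intro h1
    obtain ⟨x, hx, rfl⟩ := Finset.mem_image.1 h1
    exact hu (Finset.mem_image.2 ⟨x, hx, hfg x hx⟩)
  · intro x hx z hz
    rw [hfg x hx, hfg z hz]
    exact h.f2 x hx z hz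

lemma finB {n : ℕ} {T : SimpleGraph (Fin n)} (hT : T.IsTree) {y : ℕ → Fin n} {L : ℕ} (hy : BP T y L)
    (hL : 14 ≤ L) {D0 S : Finset (Fin n)} {f0 : Fin n → Fin n} {W0 : Finset (Sym2 (Fin n))}
    (hPD : Pt y 11 ⊆ D0) (hS : ∀ i, 1 ≤ i → i ≤ 10 → y i ∈ S) (hFr : Fr (Pt y 11) f0 W0)
    (hE : ∀ a, s(a, f0 (y 10)) ∉ W0) {f : Fin n → Fin n} {Cl W R : Finset (Sym2 (Fin n))}
    (h : GS T y D0 S f0 W0 1 f Cl W R)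
    (hfree : ∀ u, u ∉ (Finset.univ \ Gp y 1).image f → s(f (y 12), u) ∉ W) : WW T 3 Cl W := by
  obtain ⟨cU, cD⟩ := GS_unused hy (by omega) h
  obtain ⟨hSt, hf, hW⟩ := h
  have hD : ∀ a, a ∈ Finset.univ \ Gp y 1 ↔ a ≠ y 11 := by
    intro a
    rw [Finset.mem_sdiff, mem_Gp]
    constructor
    · rintro ⟨-, h⟩ rfl
      exact h ⟨11, by omega, by omega, rfl⟩
    · intro h
      refine ⟨by simp, ?_⟩
      rintro ⟨i, h1, h2, rfl⟩
      have : i = 11 := by omega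
      subst this; exact h rfl
  obtain ⟨u, hu⟩ := Finset.card_eq_one.1 cU
  have huD : u ∉ (Finset.univ \ Gp y 1).image f := by
    have : u ∈ ({u} : Finset (Fin n)) := by simp
    rw [← hu, Finset.mem_sdiff] at this
    exact this.2
  have huf : ∀ a, a ≠ y 11 → f a ≠ u := fun a ha e =>
    huD (e ▸ Finset.mem_image_of_mem f ((hD a).2 ha))
  have yne : ∀ i, i ≤ 12 → i ≠ 11 → y i ≠ y 11 := by
    intro i hi hi' e
    exact hi' (hy.2.2 _ _ (by omega) (by omega) e)
  have hFn : ∀ a, a ≠ y 11 → Function.update f (y 11) u a = f a := fun a ha => Function.update_of_ne ha _ _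
  have hF11 : Function.update f (y 11) u (y 11) = u := Function.update_self _ _ _
  have hf0 : ∀ i, i ≤ 10 → f (y i) = f0 (y i) := fun i hi => hf _ (hPD (mem_Pt.2 ⟨i, by omega, rfl⟩))
  have hclno : ∀ i j, i ≤ 12 → j ≤ 12 → i ≠ 11 → j ≠ 11 → ¬ (j = i + 1 ∨ i = j + 1) →
      s(f (y i), f (y j)) ∉ Cl := by
    intro i j hi hj hi' hj' hij h
    obtain ⟨a, ha, b, hb, hab, h5, h6⟩ := hSt.cl_mem h
    have e1 := hSt.inj _ ha _ ((hD _).2 (yne i hi hi')) h5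
    have e2 := hSt.inj _ hb _ ((hD _).2 (yne j hj hj')) h6
    subst e1; subst e2
    exact hij (hy.nbr (by omega) (by omega) hab)
  have h10 : ∀ a, s(f (y 10), a) ∉ W := by
    intro a ha
    rw [hf0 10 (by omega)] at ha
    exact hE a (swp (hW _ (hS 10 (by omega) (by omega)) a ha))
  have hPne : s(y 12, y 11) ≠ s(y 11, y 10) := by
    intro e
    rcases Sym2.eq_iff.1 e with ⟨h1, h2⟩ | ⟨h1, h2⟩
    · exact yne 12 (by omega) (by omega) h1
    · have := hy.2.2 _ _ (by omega) (by omega) h1; omega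
  have hfull := R_full hT R {s(y 12, y 11), s(y 11, y 10)} (fun x y h => (hSt.rT x y h).1) (by
      have a1 := hy.1 11 (by omega)
      have a2 := hy.1 10 (by omega)
      intro a b hab
      rw [Finset.mem_insert, Finset.mem_singleton] at hab
      rcases hab with hab | hab
      · rcases Sym2.eq_iff.1 hab with ⟨rfl, rfl⟩ | ⟨rfl, rfl⟩
        · exact a1.symm
        · exact a1
      · rcases Sym2.eq_iff.1 hab with ⟨rfl, rfl⟩ | ⟨rfl, rfl⟩
        · exact a2.symm
        · exact a2) (by
      rw [Finset.disjoint_right]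
      intro e he he'
      rw [Finset.mem_insert, Finset.mem_singleton] at he
      rcases he with rfl | rfl
      · exact (hD _).1 (hSt.rT _ _ (swp he')).2 rfl
      · exact (hD _).1 (hSt.rT _ _ he').2 rfl) (by
      rw [Finset.card_pair hPne]
      have := hSt.rc
      omega)
  refine endB hy (by omega) (F := Function.update f (y 11) u) ?_ ?_ ?_ ?_ ?_ ?_ ?_ ?_ ?_ ?_
  · intro a b hab
    by_cases ha : a = y 11 <;> by_cases hb : b = y 11
    · rw [ha, hb]
    · rw [ha, hF11, hFn b hb] at hab
      exact absurd hab.symm (huf b hb)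
    · rw [hb, hF11, hFn a ha] at hab
      exact absurd hab (huf a ha)
    · rw [hFn a ha, hFn b hb] at hab
      exact hSt.inj a ((hD a).2 ha) b ((hD b).2 hb) hab
  · intro a b hab ha hb
    rw [hFn a ha, hFn b hb]
    rcases hfull a b hab with h | h
    · rw [hSt.cl]; exact Finset.mem_image.2 ⟨_, h, rfl⟩
    · exfalso
      rw [Finset.mem_insert, Finset.mem_singleton] at h
      rcases h with h | h
      · rcases Sym2.eq_iff.1 h with ⟨h1, h2⟩ | ⟨h1, h2⟩
        · exact hb h2
        · exact ha h1
      · rcases Sym2.eq_iff.1 h with ⟨h1, h2⟩ | ⟨h1, h2⟩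
        · exact ha h1
        · exact hb h2
  · intro a; rw [hF11]; exact hSt.cl_not huD
  · rw [hFn _ (yne 12 (by omega) (by omega)), hFn _ (yne 10 (by omega) (by omega))]
    exact hclno 12 10 (by omega) (by omega) (by omega) (by omega) (by omega)
  · intro k hk
    rw [hFn _ (yne k (by omega) (by omega)), hFn _ (yne 10 (by omega) (by omega))]
    exact hclno 10 k (by omega) (by omega) (by omega) (by omega) (by omega)
  · rw [hFn _ (yne 12 (by omega) (by omega)), hF11]; exact hfree u huD
  · rw [hFn _ (yne 12 (by omega) (by omega)), hFn _ (yne 10 (by omega) (by omega))]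
    exact fun h => h10 _ (swp h)
  · rw [hFn _ (yne 10 (by omega) (by omega))]; exact h10 _
  · intro k _
    rw [hFn _ (yne 10 (by omega) (by omega))]; exact h10 _
  · intro k k' hk1 hk2 hk1' hk2' h1 h2
    rw [hFn _ (yne k (by omega) (by omega)), hF11, hf0 k hk2] at h1
    rw [hFn _ (yne k' (by omega) (by omega)), hF11, hf0 k' hk2'] at h2
    have e := hFr.f1 u _ _ (by
      intro h
      obtain ⟨x, hx, e⟩ := Finset.mem_image.1 h
      obtain ⟨i, hi, rfl⟩ := mem_Pt.1 hx
      rw [← hf0 i (by omega)] at e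
      exact huf _ (yne i (by omega) (by omega)) e) (swp (hW _ (hS k hk1 hk2) _ h1)) (swp (hW _ (hS k' hk1' hk2') _ h2))
    rw [← hf0 k hk2, ← hf0 k' hk2'] at e
    exact hy.2.2 _ _ (by omega) (by omega)
      (hSt.inj _ ((hD _).2 (yne k (by omega) (by omega))) _ ((hD _).2 (yne k' (by omega) (by omega))) e)

set_option maxHeartbeats 1000000 in
lemma caseB {n : ℕ} {T : SimpleGraph (Fin n)} {Δ : ℕ} (hT : T.IsTree)
    (hΔ : ∀ x, (Finset.univ.filter (fun z => T.Adj x z)).card ≤ Δ) {y : ℕ → Fin n}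
    (hy : BP T y (Δ+14)) (hn : Δ + 40 ≤ n) : WW T n ∅ ∅ := by
  have yinj : ∀ i j, i ≤ Δ+14 → j ≤ Δ + 14 → y i = y j → i = j := hy.2.2
  have c10 := Pt_card hy (m := 10) (by omega)
  have c11 := Pt_card hy (m := 11) (by omega)
  have hins : insert (y 10) (Pt y 10) = Pt y 11 := by
    rw [Pt, Pt, Finset.range_add_one (n := 10), Finset.image_insert]
  have h10 : y 10 ∉ Pt y 10 := by
    rw [mem_Pt]
    rintro ⟨i, hi, e⟩
    have := yinj _ _ (by omega) (by omega) e
    omega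
  have hcn : y (Δ+14) ∉ Pt y 11 := by
    rw [mem_Pt]
    rintro ⟨i, hi, e⟩
    have := yinj _ _ (by omega) (by omega) e
    omega
  set D0 := insert (y (Δ+14)) (Pt y 11) with hD0
  set S := (Finset.Icc 1 10).image y with hS
  have cD0 : D0.card = 12 := by rw [hD0, Finset.card_insert_of_notMem hcn, c11]
  have cG : (Gp y (Δ+3)).card = Δ + 3 := Gp_card hy (by omega)
  have cX : (Finset.univ \ Gp y (Δ+3)).card = n - (Δ+3) := by
    rw [Finset.card_sdiff_of_subset (Finset.subset_univ _), cG, Finset.card_univ, Fintype.card_fin]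
  have hD0n : ∀ i, 11 ≤ i → i < Δ + 14 → y i ∉ D0 := by
    intro i h1 h2 h
    rw [hD0, Finset.mem_insert, mem_Pt] at h
    rcases h with h | ⟨j, hj, h⟩
    · have := yinj _ _ (by omega) (by omega) h; omega
    · have := yinj _ _ (by omega) (by omega) h; omega
  have hSm : ∀ a, a ∈ S ↔ ∃ i, 1 ≤ i ∧ i ≤ 10 ∧ y i = a := by
    intro a; simp [hS, and_assoc]
  have hSD : S ⊆ D0 := by
    intro a ha
    obtain ⟨i, h1, h2, rfl⟩ := (hSm a).1 ha
    exact Finset.mem_insert_of_mem (mem_Pt.2 ⟨i, by omega, rfl⟩)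
  have hSn : ∀ i, 11 ≤ i → i ≤ Δ + 14 → y i ∉ S := by
    intro i h1 h2 h
    obtain ⟨j, h3, h4, e⟩ := (hSm _).1 h
    have := yinj _ _ (by omega) (by omega) e
    omega
  have hD0X : D0 ⊆ Finset.univ \ Gp y (Δ+3) := by
    intro a ha
    rw [Finset.mem_sdiff, mem_Gp]
    refine ⟨by simp, ?_⟩
    rintro ⟨i, h1, h2, rfl⟩
    exact hD0n i h1 (by omega) ha
  have grow1 : ∀ D ⊆ Pt y 10, {y 0} ⊆ D → D ≠ Pt y 10 → ∃ x ∈ D, ∃ z ∈ Pt y 10, z ∉ D ∧ T.Adj x z := by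
    intro D hD h0 hne
    by_contra hcon
    push Not at hcon
    have key : ∀ i, i < 10 → y i ∈ D := by
      intro i
      induction i with
      | zero => intro _; simpa using h0
      | succ i ih =>
        intro hi
        by_contra h
        exact hcon (y i) (ih (by omega)) (y (i+1)) (mem_Pt.2 ⟨i+1, hi, rfl⟩) h (hy.1 i (by omega))
    apply hne
    refine Finset.Subset.antisymm hD ?_
    intro a ha
    obtain ⟨i, hi, rfl⟩ := mem_Pt.1 ha
    exact key i hi
  have grow2 : ∀ D ⊆ Finset.univ \ Gp y (Δ+3), D0 ⊆ D → D ≠ Finset.univ \ Gp y (Δ+3) →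
      ∃ x ∈ D, ∃ z ∈ Finset.univ \ Gp y (Δ+3), z ∉ D ∧ T.Adj x z := by
    intro D hD h0 hne
    obtain ⟨a, ha, haD⟩ : ∃ a ∈ Finset.univ \ Gp y (Δ+3), a ∉ D := by
      by_contra hcon
      push Not at hcon
      exact hne (Finset.Subset.antisymm hD hcon)
    rw [Finset.mem_sdiff] at ha
    obtain ⟨x, hx, z, hz, hxz⟩ := cross hT (D := D ∪ Gp y (Δ+3)) (a := y (Δ+14)) (b := a)
      (Finset.mem_union_left _ (h0 (Finset.mem_insert_self _ _))) (fun h => (Finset.mem_union.1 h).elim haD ha.2)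
    have hz' := hz
    rw [Finset.mem_union, not_or] at hz'
    refine ⟨x, ?_, z, by simp [hz'.2], hz'.1, hxz⟩
    rcases Finset.mem_union.1 hx with h | h
    · exact h
    · exfalso
      obtain ⟨i, h1, h2, rfl⟩ := mem_Gp.1 h
      have key : ∀ j, 10 ≤ j → j ≤ Δ + 14 → y j ∈ D ∪ Gp y (Δ+3) := by
        intro j j1 j2
        rw [Finset.mem_union]
        by_cases e1 : j = 10
        · left; exact h0 (Finset.mem_insert_of_mem (mem_Pt.2 ⟨j, by omega, rfl⟩))
        by_cases e2 : j = Δ + 14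
        · left; rw [e2]; exact h0 (Finset.mem_insert_self _ _)
        · right; exact mem_Gp.2 ⟨j, by omega, by omega, rfl⟩
      rcases hy.2.1 i (by omega) (by omega) z hxz with e | e
      · exact hz (e ▸ key _ (by omega) (by omega))
      · exact hz (e ▸ key _ (by omega) (by omega))
  obtain ⟨q, hq⟩ : ∃ q, q = 9 := ⟨_, rfl⟩
  obtain ⟨r, hr⟩ : ∃ r, r = n - (Δ+3) - 12 := ⟨_, rfl⟩
  have hrounds : n = ((((3 + (Δ+1)) + 1) + r) + 1) + q := by omega
  refine WW_eq hrounds ?_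
  have hs1 : ({y 0} : Finset (Fin n)).card = 1 := Finset.card_singleton _
  refine phase1 (T := T) (ρ := 1) (t := (((3 + (Δ+1)) + 1) + r) + 1) (Pt y 10) {y 0} (by omega) grow1 ?_ q {y 0} id ∅ ∅ ∅ (by omega) ?_
    (Finset.Subset.refl _) (St.init _) (Fr.init _)
  · intro f Cl W R hSt hFr
    obtain ⟨u1, u2, hu1, hu2, hne, g1, g2⟩ := hSt.fresh hFr (by omega)
    refine hSt.play (x := y 9) (y := y 10) (mem_Pt.2 ⟨9, by omega, rfl⟩) h10 (hy.1 9 (by omega)) hu1 hu2 hne (g1 _) (g2 _) ?_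
    intro u u' hu hu' huu e e' hS'
    have gu : ∀ a, s(a,u) ∉ W := by rcases e with rfl | rfl <;> assumption
    have gu' : ∀ a, s(a,u') ∉ W := by rcases e' with rfl | rfl <;> assumption
    have h9 : y 9 ∈ Pt y 10 := mem_Pt.2 ⟨9, by omega, rfl⟩
    have hFr' := hFr.move h9 h10 hu hu' huu gu gu'
    have hE : ∀ a, s(a, Function.update f (y 10) u (y 10)) ∉ insert s(f (y 9), u') W := by
      intro a
      rw [Function.update_self, Finset.mem_insert, not_or]
      refine ⟨?_, gu a⟩
      intro e
      rcases Sym2.eq_iff.1 e with ⟨h1, h2⟩ | ⟨h1, h2⟩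
      · exact huu h2
      · exact hu (h2 ▸ Finset.mem_image_of_mem f h9)
    rw [hins] at hS' hFr'
    revert hS' hFr' hE
    generalize Function.update f (y 10) u = f1
    generalize insert s(f (y 9), u') W = W1
    generalize insert s(f (y 9), u) Cl = Cl1
    generalize insert s(y 9, y 10) R = R1
    intro hS' hFr' hE
    obtain ⟨c, hc⟩ : ∃ c, c ∉ (Pt y 11).image f1 := by
      by_contra hcon
      push Not at hcon
      have h1 := Finset.eq_univ_iff_forall.2 hcon
      have h2 := hS'.card_image
      rw [h1, Finset.card_univ, Fintype.card_fin] at h2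
      omega
    have hJ := hS'.jump hcn hc
    have hFr2 : Fr (Pt y 11) (Function.update f1 (y (Δ+14)) c) W1 := hFr'.congr (fun x hx => upd hcn hx)
    have hE2 : ∀ a, s(a, Function.update f1 (y (Δ+14)) c (y 10)) ∉ W1 := by
      rw [upd hcn (mem_Pt.2 ⟨10, by omega, rfl⟩)]; exact hE
    revert hJ hFr2 hE2
    generalize Function.update f1 (y (Δ+14)) c = f0
    intro hJ hFr2 hE2
    refine phase2 (T := T) (ρ := 2) (t := (3 + (Δ+1)) + 1) hΔ (Finset.univ \ Gp y (Δ+3)) D0 S f0 W1 (by omega) grow2 hSD ?_ ?_ r D0 f0 Cl1 W1 R1 (by omega) hD0X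
      (Finset.Subset.refl _) hJ (fun x _ => rfl) (fun s _ a h => h)
    · intro s hs z hz hsz
      obtain ⟨i, h1, h2, rfl⟩ := (hSm s).1 hs
      have hz11 : z ≠ y 11 := by
        rintro rfl
        exact (Finset.mem_sdiff.1 hz).2 (mem_Gp.2 ⟨11, by omega, by omega, rfl⟩)
      rcases hy.2.1 i (by omega) (by omega) z hsz with e | e
      · exact Finset.mem_insert_of_mem (mem_Pt.2 ⟨i-1, by omega, e.symm⟩)
      · refine Finset.mem_insert_of_mem (mem_Pt.2 ⟨i+1, ?_, e.symm⟩)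
        by_contra hc
        have : i = 10 := by omega
        subst this
        exact hz11 e
    · intro f Cl W R hSt2 hf hW
      obtain ⟨u1, u2, hu1, hu2, hne, g1, g2⟩ := hSt2.pair hΔ (x := y (Δ+14)) (hD0X (Finset.mem_insert_self _ _)) (by omega)
      refine gapstep hy (m := Δ+2) (by omega) hD0n hSD hSn ⟨hSt2, hf, hW⟩ hu1 hu2 hne g1 g2 ?_
      intro f' Cl' W' R' k1 k2
      refine gap hy hD0n hSD hSn ?_ (Δ+1) f' Cl' W' R' (by omega) k1 k2
      intro f'' Cl'' W'' R'' m1 m2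
      exact finB hT hy (by omega) (Finset.subset_insert _ _) (fun i h1 h2 => (hSm _).2 ⟨i, h1, h2, rfl⟩) hFr2 hE2 m1 m2
  · intro a ha
    rw [Finset.mem_singleton] at ha
    subst ha
    exact mem_Pt.2 ⟨0, by omega, rfl⟩

lemma WW_main {n : ℕ} {T : SimpleGraph (Fin n)} {Δ : ℕ} (hT : T.IsTree)
    (hΔ : ∀ x, (Finset.univ.filter (fun z => T.Adj x z)).card ≤ Δ)
    (h1 : 10000 * (Δ * Δ) ≤ n) (h2 : 10000 ≤ n) : WW T n ∅ ∅ := by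
  have h3 : 2 * Δ ≤ Δ * Δ + 1 := by nlinarith [sq_nonneg ((Δ:ℤ) - 1)]
  have e : (Δ+1+((Δ+14)+1)+(Δ+14)) * (2*Δ+8) = 6 * (Δ*Δ) + 84 * Δ + 240 := by ring
  rcases dichotomy (L := Δ+14) hT hΔ (2*Δ+8) (by rw [e]; omega) with ⟨y, hy⟩ | ⟨v, C, hB, hM, hC⟩
  · exact caseB hT hΔ hy (by omega)
  · rw [e] at hC
    exact caseA hT hΔ hB hM (by omega)

lemma WC_fin : 
    ∃ ε : ℝ, 0 < ε ∧ ∃ n₀ : ℕ, ∀ n : ℕ, n₀ ≤ n →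
      ∀ T : SimpleGraph (Fin n), T.IsTree →
        (∀ v : Fin n, ((T.neighborSet v).ncard : ℝ) ≤ ε * Real.sqrt n) →
        (∃ t, WW T t ∅ ∅) ∧ WW T n ∅ ∅ ∧ ∀ t, WW T t ∅ ∅ → n - 1 ≤ t := by
  refine ⟨1/100, by norm_num, 10000, ?_⟩
  intro n hn T hT hd
  have hw : WW T n ∅ ∅ := by
    refine WW_main (Δ := ⌊1/100 * Real.sqrt n⌋₊) hT ?_ ?_ hn
    · intro x
      apply Nat.le_floor
      have hx : (Finset.univ.filter (fun z => T.Adj x z)).card = (T.neighborSet x).ncard := by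
        rw [← Set.ncard_coe_finset]
        congr 1
        ext z
        simp
      rw [hx]
      exact hd x
    · have h0 : (0:ℝ) ≤ 1/100 * Real.sqrt n := by positivity
      have h1 := Nat.floor_le h0
      have h2 := Real.mul_self_sqrt (Nat.cast_nonneg (α := ℝ) n)
      have h3 := mul_self_le_mul_self (Nat.cast_nonneg _) h1
      have : (10000:ℝ) * ((⌊1/100 * Real.sqrt n⌋₊:ℝ) * (⌊1/100 * Real.sqrt n⌋₊:ℝ)) ≤ n := by
        nlinarith
      exact_mod_cast this
  refine ⟨⟨n, hw⟩, hw, ?_⟩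
  intro t ht
  obtain ⟨A, hA, hc⟩ := WW_lower t _ _ ht
  rw [copies_card hT A hA] at hc
  simpa using hc

end WCproof

/-- There is `ε > 0` such that for every large enough `n` and every spanning tree `T` of `K_n`
with maximum degree at most `ε·√n`, in the unbiased Waiter-Client game whose winning sets are
the copies of `T` in `K_n`, we have `n − 1 ≤ τ_WC(F_T, 1) ≤ n`. -/
theorem WC_spanning_tree :
    ∃ ε : ℝ, 0 < ε ∧ ∃ n₀ : ℕ, ∀ n : ℕ, n₀ ≤ n →
      ∀ T : SimpleGraph (Fin n), T.IsTree →
        (∀ v : Fin n, ((T.neighborSet v).ncard : ℝ) ≤ ε * Real.sqrt n) →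
        n - 1 ≤ tauWC (Kedges n) (copiesFamily n T.edgeSet) 1 ∧
        tauWC (Kedges n) (copiesFamily n T.edgeSet) 1 ≤ n := by
  obtain ⟨ε, hε, n₀, H⟩ := WC_fin
  refine ⟨ε, hε, n₀, ?_⟩
  intro n hn T hT hd
  obtain ⟨h1, h2, h3⟩ := H n hn T hT hd
  have e : tauWC (Kedges n) (copiesFamily n T.edgeSet) 1 = sInf {t | WW T t ∅ ∅} := by
    unfold tauWC WW
    congr!
  rw [e]
  exact ⟨h3 _ (Nat.sInf_mem (s := {t | WW T t ∅ ∅}) h1), Nat.sInf_le h2⟩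
end

section
/- For every large enough integer n, if T is a path on n vertices, then in the unbiased Waiter-Client game on the edge set of K_n whose winning sets are the copies of T in K_n, Waiter can win in exactly n − 1 rounds; that is, τ_WC(F_T, 1) = n − 1. -/
open Finset

/-- The edge set of the path `0 - 1 - ⋯ - (n−1)` on the vertex set `Fin n`. -/
def pathEdges (n : ℕ) : Set (Sym2 (Fin n)) :=
  {e | ∃ i j : Fin n, e = s(i, j) ∧ (j : ℕ) = (i : ℕ) + 1}


theorem wc_final (n : ℕ) (l : List (Fin n)) (Cl : Finset (Sym2 (Fin n))) (hl : l.length = n)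
    (hn : l.Nodup) (hc : l.IsChain (fun x y => s(x, y) ∈ Cl)) :
    ∃ A ∈ copiesFamily n (pathEdges n), A ⊆ Cl := by
  classical
  let f : Fin n → Fin n := fun i => l.get (i.cast hl.symm)
  have hf : Function.Injective f := by
    intro i j hij
    have := (List.nodup_iff_injective_get.1 hn) hij
    simpa [Fin.ext_iff] using this
  let σ : Equiv.Perm (Fin n) := Equiv.ofBijective f (Finite.injective_iff_bijective.1 hf)
  refine ⟨(Set.toFinite (Sym2.map σ '' pathEdges n)).toFinset, ⟨σ, by simp⟩, ?_⟩
  intro e he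
  rw [Set.Finite.mem_toFinset] at he
  obtain ⟨_, ⟨i, j, rfl, hij⟩, rfl⟩ := he
  have := (List.isChain_iff_getElem.1 hc) i (by have := j.2; omega)
  simpa [σ, f, hij] using this

theorem wc_main (n : ℕ) : ∀ (t : ℕ) (a b : Fin n) (m : List (Fin n)) (Cl W : Finset (Sym2 (Fin n))),
    (a :: (m ++ [b])).Nodup → (a :: (m ++ [b])).length + t = n →
    (a :: (m ++ [b])).IsChain (fun x y => s(x, y) ∈ Cl) →
    (∀ u, u ∉ (a :: (m ++ [b])) → ∀ v, s(u, v) ∈ Cl ∪ W → v ∈ m) →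
    WaiterWins (Kedges n) 1 (fun Cl _ => ∃ A ∈ copiesFamily n (pathEdges n), A ⊆ Cl) t Cl W := by
  intro t
  induction t with
  | zero =>
    intro a b m Cl W hn hl hc _
    exact wc_final n _ Cl (by simpa using hl) hn hc
  | succ t ih =>
    intro a b m Cl W hn hl hc hi
    right
    obtain ⟨u, hu⟩ : ∃ u, u ∉ (a :: (m ++ [b])) := by
      by_contra! h
      have h1 : (a :: (m ++ [b])).toFinset = Finset.univ := by ext x; have := h x; simp at this ⊢; tauto
      have h2 := List.toFinset_card_of_nodup hn
      rw [h1, Finset.card_univ, Fintype.card_fin] at h2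
      omega
    have hu' := hu
    have hn' := hn
    simp only [List.mem_cons, List.mem_append, List.not_mem_nil, or_false, not_or] at hu
    obtain ⟨hua, hum, hub⟩ := hu
    have hab : a ≠ b := by rintro rfl; simp at hn
    have ham : a ∉ m := by intro h; simp [h] at hn
    have hbm : b ∉ m := by
      intro h; simp [List.nodup_append, h] at hn
      exact hn.2.2 b h rfl
    have hne : s(a, u) ≠ s(b, u) := by
      simp [hab, Ne.symm hua]
    have hsub : ({s(a, u), s(b, u)} : Finset (Sym2 (Fin n))) ⊆ Kedges n \ (Cl ∪ W) := by
      intro e he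
      simp only [Finset.mem_insert, Finset.mem_singleton] at he
      rw [Finset.mem_sdiff]
      rcases he with rfl | rfl
      · exact ⟨by simp [Kedges, Ne.symm hua], fun h => ham (hi u hu' a (by rwa [Sym2.eq_swap]))⟩
      · exact ⟨by simp [Kedges, Ne.symm hub], fun h => hbm (hi u hu' b (by rwa [Sym2.eq_swap]))⟩
    have hcard : ({s(a, u), s(b, u)} : Finset (Sym2 (Fin n))).card = 2 := Finset.card_pair hne
    have hold : ∀ e ∈ ({s(a, u), s(b, u)} : Finset (Sym2 (Fin n))), ∀ u' v,
        u' ∉ (a :: (m ++ [b])) → u' ≠ u →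
        s(u', v) ∈ insert e Cl ∪ (W ∪ ({s(a, u), s(b, u)} : Finset (Sym2 (Fin n))).erase e) →
        v ∈ m := by
      intro e he u' v h1 h2 h3
      have h4 : s(u', v) ∈ Cl ∪ W ∨ s(u', v) ∈ ({s(a, u), s(b, u)} : Finset (Sym2 (Fin n))) := by
        simp only [Finset.mem_union, Finset.mem_insert, Finset.mem_erase] at h3 he ⊢
        rcases h3 with (rfl | h) | h | h <;> tauto
      rcases h4 with h4 | h4
      · exact hi u' h1 v h4
      · exfalso
        simp at h1 h4
        tauto
    refine ⟨{s(a, u), s(b, u)}, by simp, hsub, ?_, ?_⟩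
    · have := Finset.card_le_card hsub
      omega
    · intro e he
      have hold' := hold e he
      simp only [Finset.mem_insert, Finset.mem_singleton] at he
      rcases he with rfl | rfl
      · refine ih u b (a :: m) _ _ ?_ ?_ ?_ ?_
        · exact List.nodup_cons.2 ⟨hu', hn⟩
        · simp at hl ⊢; omega
        · refine List.IsChain.cons_cons (by simp [Sym2.eq_swap]) ?_
          exact hc.imp (fun _ _ h => Finset.mem_insert_of_mem h)
        · intro u' h v hv
          exact List.mem_cons_of_mem _ (hold' u' v (fun h' => h (List.mem_cons_of_mem _ h'))
            (fun h' => h (by simp [h'])) hv)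
      · refine ih a u (m ++ [b]) _ _ ?_ ?_ ?_ ?_
        · have : (a :: (m ++ [b]) ++ [u]).Nodup := by
            rw [List.nodup_append]
            refine ⟨hn, by simp, ?_⟩
            intro x hx y hy hxy
            simp only [List.mem_singleton] at hy
            subst hy; subst hxy; exact hu' hx
          exact this
        · simp at hl ⊢; omega
        · have : (a :: (m ++ [b]) ++ [u]).IsChain (fun x y => s(x, y) ∈ insert s(b, u) Cl) := by
            rw [List.isChain_append]
            refine ⟨hc.imp (fun _ _ h => Finset.mem_insert_of_mem h), by simp, ?_⟩
            intro x hx y hy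
            rw [← List.cons_append, List.getLast?_append] at hx
            simp at hx hy
            subst hx; subst hy; simp
          exact this
        · intro u' h v hv
          exact List.mem_append_left _ (hold' u' v (fun h' => h (by simp at h' ⊢; tauto))
            (fun h' => h (by simp [h'])) hv)

theorem wc_step {n : ℕ} {win : Finset (Sym2 (Fin n)) → Finset (Sym2 (Fin n)) → Prop} {t : ℕ}
    {Cl W : Finset (Sym2 (Fin n))} (x p q : Fin n) (hp : x ≠ p) (hq : x ≠ q) (hpq : p ≠ q)
    (h1 : s(x, p) ∉ Cl ∪ W) (h2 : s(x, q) ∉ Cl ∪ W)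
    (hw1 : WaiterWins (Kedges n) 1 win t (insert s(x, p) Cl) (W ∪ {s(x, q)}))
    (hw2 : WaiterWins (Kedges n) 1 win t (insert s(x, q) Cl) (W ∪ {s(x, p)})) :
    WaiterWins (Kedges n) 1 win (t + 1) Cl W := by
  right
  have hne : s(x, p) ≠ s(x, q) := by simp [hpq, hq]
  have hsub : ({s(x, p), s(x, q)} : Finset (Sym2 (Fin n))) ⊆ Kedges n \ (Cl ∪ W) := by
    intro e he
    simp only [Finset.mem_insert, Finset.mem_singleton] at he
    rw [Finset.mem_sdiff]
    rcases he with rfl | rfl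
    · exact ⟨by simp [Kedges, hp], h1⟩
    · exact ⟨by simp [Kedges, hq], h2⟩
  have hcard : ({s(x, p), s(x, q)} : Finset (Sym2 (Fin n))).card = 2 := Finset.card_pair hne
  refine ⟨{s(x, p), s(x, q)}, by simp, hsub, ?_, ?_⟩
  · have := Finset.card_le_card hsub
    omega
  · intro e he
    simp only [Finset.mem_insert, Finset.mem_singleton] at he
    rcases he with rfl | rfl
    · have : ({s(x, p), s(x, q)} : Finset (Sym2 (Fin n))).erase s(x, p) = {s(x, q)} := by
        ext e; simp only [Finset.mem_erase, Finset.mem_insert, Finset.mem_singleton]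
        constructor
        · tauto
        · rintro rfl; exact ⟨hne.symm, Or.inr rfl⟩
      rwa [this]
    · have : ({s(x, p), s(x, q)} : Finset (Sym2 (Fin n))).erase s(x, q) = {s(x, p)} := by
        ext e; simp only [Finset.mem_erase, Finset.mem_insert, Finset.mem_singleton]
        constructor
        · tauto
        · rintro rfl; exact ⟨hne, Or.inl rfl⟩
      rwa [this]

theorem wc_three (t : ℕ) (x y z u w : Fin (t + 3)) (hxy : x ≠ y) (hxu : x ≠ u) (hyu : y ≠ u) :
    WaiterWins (Kedges (t + 3)) 1
      (fun Cl _ => ∃ A ∈ copiesFamily (t + 3) (pathEdges (t + 3)), A ⊆ Cl) t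
      (insert s(x, u) (insert s(x, y) ∅)) (∅ ∪ {s(x, z)} ∪ {s(x, w)}) := by
  refine wc_main (t + 3) t y u [x] _ _ ?_ ?_ ?_ ?_
  · simp [hxy.symm, hxu, hyu]
  · simp; omega
  · simp [Sym2.eq_swap]
  · intro p hp v hv
    simp at hp hv ⊢
    tauto

theorem wc_lower {X : Type*} [DecidableEq X] (board : Finset X) (b : ℕ) (F : Set (Finset X)) :
    ∀ (t : ℕ) (Cl W : Finset X),
    WaiterWins board b (fun Cl _ => ∃ A ∈ F, A ⊆ Cl) t Cl W → ∃ A ∈ F, A.card ≤ Cl.card + t := by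
  intro t
  induction t with
  | zero =>
    rintro Cl W ⟨A, hA, h⟩
    exact ⟨A, hA, Finset.card_le_card h⟩
  | succ t ih =>
    rintro Cl W (⟨A, hA, h⟩ | ⟨O, ⟨x, hx⟩, -, -, h⟩)
    · exact ⟨A, hA, (Finset.card_le_card h).trans (by omega)⟩
    · obtain ⟨A, hA, h⟩ := ih _ _ (h x hx)
      have := Finset.card_insert_le x Cl
      exact ⟨A, hA, by omega⟩

theorem wc_card (k : ℕ) (A : Finset (Sym2 (Fin (k + 1))))
    (hA : A ∈ copiesFamily (k + 1) (pathEdges (k + 1))) : k ≤ A.card := by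
  obtain ⟨σ, hσ⟩ := hA
  let g : Fin k → Sym2 (Fin (k + 1)) := fun i => Sym2.map σ s(i.castSucc, i.succ)
  have hg : Function.Injective g := by
    intro i j hij
    have := Sym2.map.injective σ.injective hij
    simp [Fin.ext_iff] at this
    ext; omega
  have hsub : Finset.univ.image g ⊆ A := by
    intro e he
    obtain ⟨i, -, rfl⟩ := Finset.mem_image.1 he
    rw [← Finset.mem_coe, hσ]
    exact ⟨_, ⟨i.castSucc, i.succ, rfl, by simp⟩, rfl⟩
  have := Finset.card_le_card hsub
  rwa [Finset.card_image_of_injective _ hg, Finset.card_univ, Fintype.card_fin] at this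

/-- For every large enough `n`, if `T` is a path on `n` vertices, then in the unbiased
Waiter-Client game on `K_n` whose winning sets are the copies of `T`, Waiter wins in exactly
`n − 1` rounds: `τ_WC(F_T, 1) = n − 1`. -/
theorem WC_hamilton_path :
    ∃ n₀ : ℕ, ∀ n : ℕ, n₀ ≤ n →
      tauWC (Kedges n) (copiesFamily n (pathEdges n)) 1 = n - 1 := by
  refine ⟨5, fun n hn => ?_⟩
  obtain ⟨k, rfl⟩ : ∃ k, n = (k + 2) + 3 := ⟨n - 5, by omega⟩
  have hwin : k + 2 + 3 - 1 ∈ {t | WaiterWins (Kedges (k + 2 + 3)) 1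
      (fun Cl _ => ∃ A ∈ copiesFamily (k + 2 + 3) (pathEdges (k + 2 + 3)), A ⊆ Cl) t ∅ ∅} := by
    let v : ∀ i : ℕ, i < 5 → Fin (k + 2 + 3) := fun i hi => ⟨i, by omega⟩
    have hv : ∀ i j hi hj, i ≠ j → v i hi ≠ v j hj := by
      intro i j hi hj hij; simpa [v, Fin.ext_iff] using hij
    have h01 := hv 0 1 (by omega) (by omega) (by omega)
    have h02 := hv 0 2 (by omega) (by omega) (by omega)
    have h03 := hv 0 3 (by omega) (by omega) (by omega)
    have h04 := hv 0 4 (by omega) (by omega) (by omega)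
    have h12 := hv 1 2 (by omega) (by omega) (by omega)
    have h13 := hv 1 3 (by omega) (by omega) (by omega)
    have h14 := hv 1 4 (by omega) (by omega) (by omega)
    have h23 := hv 2 3 (by omega) (by omega) (by omega)
    have h24 := hv 2 4 (by omega) (by omega) (by omega)
    have h34 := hv 3 4 (by omega) (by omega) (by omega)
    generalize v 0 (by omega) = a0 at *
    generalize v 1 (by omega) = a1 at *
    generalize v 2 (by omega) = a2 at *
    generalize v 3 (by omega) = a3 at *
    generalize v 4 (by omega) = a4 at *
    rw [Set.mem_ofPred_eq, show k + 2 + 3 - 1 = (k + 2 + 1) + 1 by omega]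
    refine wc_step a0 a1 a2 h01 h02 h12 (by simp) (by simp) ?_ ?_
    · refine wc_step a0 a3 a4 h03 h04 h34 ?_ ?_ ?_ ?_
      · simp [h13.symm, h23.symm, h02, h01]
      · simp [h14.symm, h24.symm, h02, h01]
      · exact wc_three _ _ _ _ _ _ h01 h03 h13
      · exact wc_three _ _ _ _ _ _ h01 h04 h14
    · refine wc_step a0 a3 a4 h03 h04 h34 ?_ ?_ ?_ ?_
      · simp [h13.symm, h23.symm, h02, h01]
      · simp [h14.symm, h24.symm, h02, h01]
      · exact wc_three _ _ _ _ _ _ h02 h03 h23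
      · exact wc_three _ _ _ _ _ _ h02 h04 h24
  refine le_antisymm (Nat.sInf_le hwin) ?_
  refine le_csInf ⟨_, hwin⟩ ?_
  intro t ht
  obtain ⟨A, hA, h⟩ := wc_lower _ _ _ t _ _ ht
  have := wc_card (k + 4) A hA
  simp at h
  omega
end
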